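/- arXiv:math/9903192 — 2 statements merged into one kernel-verified Lean document; each statement's English description precedes it below -/
import Mathlib

section
/- Let D be a nonempty minimal Enriques diagram with exactly one root and cod(D) ≤ 10. Then D is isomorphic to one of the following diagrams: A_1, …, A_10, D_4, …, D_10, J_{2,0}, J_{2,1}, E_6, E_7, E_8, X_{1,0}, X_{1,1}, X_{1,2}, Z_{11}, Y_{1,1}. -/
open Classical Finset

/-- The raw data of a finite weighted forest equipped with a proximity relation.
The vertices are the elements of `Fin n`; `parent v` is the immediate predecessor of `v`
(`none` iff `v` is a root); `wt v` is the weight of `v`; and `prox a b` means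
that `a` is proximate to `b`. -/
structure PreDiagram where
  n : ℕ
  parent : Fin n → Option (Fin n)
  wt : Fin n → ℕ
  prox : Fin n → Fin n → Prop

namespace PreDiagram

variable (D : PreDiagram)

/-- `a` is the immediate predecessor of `b`. -/
def ImPred (a b : Fin D.n) : Prop := D.parent b = some a

/-- `a` is a predecessor of `b` (reflexive-transitive closure of `ImPred`). -/
def Pred (a b : Fin D.n) : Prop := Relation.ReflTransGen D.ImPred a b

/-- `a` is a proper predecessor of `b`. -/
def ProperPred (a b : Fin D.n) : Prop := Relation.TransGen D.ImPred a b

/-- `a` is a remote predecessor of `b`: a proper but not immediate predecessor. -/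
def RemotePred (a b : Fin D.n) : Prop := D.ProperPred a b ∧ ¬ D.ImPred a b

def IsRoot (v : Fin D.n) : Prop := D.parent v = none

/-- A leaf is a vertex with no proper successor. -/
def IsLeaf (v : Fin D.n) : Prop := ∀ w, ¬ D.ImPred v w

/-- `a` is remotely proximate to `b`: proximate to `b`, and `b` is a remote predecessor. -/
def RemoteProx (a b : Fin D.n) : Prop := D.prox a b ∧ D.RemotePred b a

/-- A satellite is a vertex proximate to a remote predecessor. -/
def IsSatellite (v : Fin D.n) : Prop := ∃ t, D.RemoteProx v t

/-- A free vertex is one that is not a satellite. -/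
def IsFree (v : Fin D.n) : Prop := ¬ D.IsSatellite v

/-- The laws of a minimal Enriques diagram. -/
structure IsMED : Prop where
  /-- The graph is a forest: no vertex is a proper predecessor of itself. -/
  forest : ∀ v, ¬ D.ProperPred v v
  /-- Every weight is at least `1`. -/
  wt_pos : ∀ v, 1 ≤ D.wt v
  /-- Law of Proximity: a root is proximate to no vertex. -/
  root_not_prox : ∀ v, D.IsRoot v → ∀ w, ¬ D.prox v w
  /-- Law of Proximity: a non-root is proximate to its immediate predecessor. -/
  prox_parent : ∀ v u, D.parent v = some u → D.prox v u
  /-- Law of Proximity: any other vertex a non-root is proximate to is a remote predecessor. -/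
  prox_remote : ∀ v u w, D.parent v = some u → D.prox v w → w ≠ u → D.RemotePred w v
  /-- Law of Proximity: a non-root is proximate to at most one vertex other than its
  immediate predecessor. -/
  prox_unique : ∀ v u w w', D.parent v = some u → D.prox v w → D.prox v w' →
      w ≠ u → w' ≠ u → w = w'
  /-- Law of Proximity: if `a` is proximate to `b` and `c` lies properly between them,
  then `c` is proximate to `b`. -/
  prox_between : ∀ a b c, D.prox a b → D.ProperPred b c → D.ProperPred c a → D.prox c b
  /-- Proximity Inequality. -/
  prox_ineq : ∀ v, ∑ w ∈ univ.filter (fun w => D.prox w v), D.wt w ≤ D.wt v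
  /-- Law of Succession: a vertex `v` has at most `wt v` immediate successors. -/
  succ_card : ∀ v, (univ.filter (fun w => D.ImPred v w)).card ≤ D.wt v
  /-- Law of Succession: at most two immediate successors are satellites. -/
  succ_sat : ∀ v w₁ w₂ w₃, D.ImPred v w₁ → D.ImPred v w₂ → D.ImPred v w₃ →
      D.IsSatellite w₁ → D.IsSatellite w₂ → D.IsSatellite w₃ →
      w₁ ≠ w₂ → w₁ ≠ w₃ → w₂ ≠ w₃ → False
  /-- Law of Succession: two distinct immediate successors of the same vertex cannot be
  satellites of the same vertex. -/
  succ_sat_diff : ∀ v w₁ w₂ t, D.ImPred v w₁ → D.ImPred v w₂ → w₁ ≠ w₂ →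
      D.RemoteProx w₁ t → D.RemoteProx w₂ t → False
  /-- Law of Minimality: every leaf of weight `1` is a satellite. -/
  minimal : ∀ v, D.IsLeaf v → D.wt v = 1 → D.IsSatellite v

/-- The number of roots. -/
noncomputable def rts : ℕ := (univ.filter (fun v => D.IsRoot v)).card

/-- The number of free vertices. -/
noncomputable def frs : ℕ := (univ.filter (fun v => D.IsFree v)).card

/-- `dim D = rts D + frs D`. -/
noncomputable def dimD : ℕ := D.rts + D.frs

/-- `deg D = Σ_V C(m_V + 1, 2)`. -/
def degD : ℕ := ∑ v, (D.wt v + 1).choose 2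

/-- `cod D = deg D - dim D`. -/
noncomputable def cod : ℤ := (D.degD : ℤ) - (D.dimD : ℤ)

/-- `δ(D) = Σ_V C(m_V, 2)`. -/
def deltaD : ℕ := ∑ v, (D.wt v).choose 2

/-- `r(D) = Σ_V (m_V - Σ_{W ≻ V} m_W)`. -/
noncomputable def rCh : ℤ :=
  ∑ v, ((D.wt v : ℤ) - ∑ w ∈ univ.filter (fun w => D.prox w v), (D.wt w : ℤ))

/-- `μ(D) = 2 δ(D) - r(D) + rts D`. -/
noncomputable def mu : ℤ := 2 * (D.deltaD : ℤ) - D.rCh + (D.rts : ℤ)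

/-- An isomorphism of diagrams: a weight-preserving bijection of the vertices preserving
the immediate-predecessor and proximity relations. -/
structure Iso (D₁ D₂ : PreDiagram) where
  toEquiv : Fin D₁.n ≃ Fin D₂.n
  wt_eq : ∀ v, D₂.wt (toEquiv v) = D₁.wt v
  imPred_iff : ∀ a b, D₂.ImPred (toEquiv a) (toEquiv b) ↔ D₁.ImPred a b
  prox_iff : ∀ a b, D₂.prox (toEquiv a) (toEquiv b) ↔ D₁.prox a b

def Isomorphic (D₁ D₂ : PreDiagram) : Prop := Nonempty (Iso D₁ D₂)

/-- A realization of `D'` as a subdiagram of `D`: an injection of the vertices such that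
the weight of a vertex of `D'` is at most its weight in `D`, and the succession
(predecessor) and proximity relations of `D'` are the ones induced from `D`. -/
structure Subdiagram (D' D : PreDiagram) where
  toFun : Fin D'.n → Fin D.n
  inj : Function.Injective toFun
  wt_le : ∀ v, D'.wt v ≤ D.wt (toFun v)
  pred_iff : ∀ a b, D'.Pred a b ↔ D.Pred (toFun a) (toFun b)
  prox_iff : ∀ a b, D'.prox a b ↔ D.prox (toFun a) (toFun b)

def IsSubdiagram (D' D : PreDiagram) : Prop := Nonempty (Subdiagram D' D)

/-- The parent function of a chain `0 → 1 → ⋯ → n-1`. -/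
def chainParent (n : ℕ) (v : Fin n) : Option (Fin n) :=
  if v.val = 0 then none
  else some ⟨v.val - 1, lt_of_le_of_lt (Nat.sub_le _ _) v.isLt⟩

/-- The diagram `A_k` (`k ≥ 1`): for `k = 2i-1`, a chain of `i` free vertices of weight `2`;
for `k = 2i`, such a chain followed by a chain of two vertices of weight `1`, both
proximate to the `i`-th weight-`2` vertex. -/
def diagA (k : ℕ) : PreDiagram where
  n := if k % 2 = 0 then k / 2 + 2 else (k + 1) / 2
  parent := chainParent _
  wt := fun v => if v.val < (k + 1) / 2 then 2 else 1
  prox := fun a b => a.val = b.val + 1 ∨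
    (k % 2 = 0 ∧ a.val = k / 2 + 1 ∧ b.val + 1 = k / 2)

/-- The diagram `D_k` (`k ≥ 4`): a root of weight `3`, followed by nothing if `k = 4`,
by two vertices of weight `1` both proximate to the root if `k = 5`, and by the diagram
`A_{k-5}` if `k ≥ 6`. -/
def diagD (k : ℕ) : PreDiagram where
  n := (k - 4) / 2 + (if k % 2 = 0 then 1 else 3)
  parent := chainParent _
  wt := fun v => if v.val = 0 then 3 else if v.val ≤ (k - 4) / 2 then 2 else 1
  prox := fun a b => a.val = b.val + 1 ∨
    (k % 2 = 1 ∧ a.val = (k - 4) / 2 + 2 ∧ b.val = (k - 4) / 2)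

/-- The diagram `E_{6l+j}` (`l ≥ 1`, `j ∈ {0,1,2}`), with argument `m = 6l + j`. -/
def diagE (m : ℕ) : PreDiagram where
  n := m / 6 + (if m % 6 = 1 then 2 else 3)
  parent := chainParent _
  wt := fun v => if v.val < m / 6 then 3 else
    if 1 ≤ m % 6 ∧ v.val = m / 6 then 2 else 1
  prox := fun a b => a.val = b.val + 1 ∨
    (m % 6 = 0 ∧ (a.val = m / 6 + 1 ∨ a.val = m / 6 + 2) ∧ b.val + 1 = m / 6) ∨
    (m % 6 = 1 ∧ a.val = m / 6 + 1 ∧ b.val + 1 = m / 6) ∨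
    (m % 6 = 2 ∧ ((a.val = m / 6 + 1 ∧ b.val + 1 = m / 6) ∨
                  (a.val = m / 6 + 2 ∧ b.val = m / 6)))

/-- The diagram `J_{l,k}` (`l ≥ 2`, `k ≥ 0`): a chain of `l - 1` free vertices of weight `3`
followed by the diagram `D_{k+4}`. -/
def diagJ (l k : ℕ) : PreDiagram where
  n := (l - 1) + k / 2 + (if k % 2 = 0 then 1 else 3)
  parent := chainParent _
  wt := fun v => if v.val ≤ l - 1 then 3 else if v.val ≤ l - 1 + k / 2 then 2 else 1
  prox := fun a b => a.val = b.val + 1 ∨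
    (k % 2 = 1 ∧ a.val = (l - 1) + k / 2 + 2 ∧ b.val = (l - 1) + k / 2)

/-- The diagram `X_{1,0}`: a single root of weight `4`. -/
def diagX10 : PreDiagram where
  n := 1
  parent := chainParent _
  wt := fun _ => 4
  prox := fun a b => a.val = b.val + 1

/-- The diagram `X_{1,1}`: a root of weight `4` followed by a chain of two vertices of
weight `1`, both proximate to the root. -/
def diagX11 : PreDiagram where
  n := 3
  parent := chainParent _
  wt := fun v => if v.val = 0 then 4 else 1
  prox := fun a b => a.val = b.val + 1 ∨ (a.val = 2 ∧ b.val = 0)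

/-- The diagram `X_{1,2}`: a root of weight `4` followed by one free vertex of weight `2`. -/
def diagX12 : PreDiagram where
  n := 2
  parent := chainParent _
  wt := fun v => if v.val = 0 then 4 else 2
  prox := fun a b => a.val = b.val + 1

/-- The diagram `Z_{11}`: a root of weight `4` followed by a chain of three vertices of
weight `1`, all proximate to the root. -/
def diagZ11 : PreDiagram where
  n := 4
  parent := chainParent _
  wt := fun v => if v.val = 0 then 4 else 1
  prox := fun a b => a.val = b.val + 1 ∨ ((a.val = 2 ∨ a.val = 3) ∧ b.val = 0)

/-- The diagram `Y_{1,1}`: a root of weight `4` with two immediate free successors of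
weight `1`, each of which has one immediate successor of weight `1` that is remotely
proximate to the root. -/
def diagY11 : PreDiagram where
  n := 5
  parent := fun v =>
    if v.val = 0 then none
    else if v.val ≤ 2 then some ⟨0, by omega⟩
    else if v.val = 3 then some ⟨1, by omega⟩
    else some ⟨2, by omega⟩
  wt := fun v => if v.val = 0 then 4 else 1
  prox := fun a b => (a.val = 1 ∧ b.val = 0) ∨ (a.val = 2 ∧ b.val = 0) ∨
    (a.val = 3 ∧ (b.val = 1 ∨ b.val = 0)) ∨ (a.val = 4 ∧ (b.val = 2 ∨ b.val = 0))

/-- The disjoint union of two diagrams. -/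
def disjUnion (D₁ D₂ : PreDiagram) : PreDiagram where
  n := D₁.n + D₂.n
  parent := fun v =>
    if h : v.val < D₁.n then
      (D₁.parent ⟨v.val, h⟩).map
        (fun w => ⟨w.val, Nat.lt_of_lt_of_le w.isLt (Nat.le_add_right _ _)⟩)
    else
      (D₂.parent ⟨v.val - D₁.n, by have := v.isLt; omega⟩).map
        (fun w => ⟨D₁.n + w.val, by have := w.isLt; omega⟩)
  wt := fun v =>
    if h : v.val < D₁.n then D₁.wt ⟨v.val, h⟩
    else D₂.wt ⟨v.val - D₁.n, by have := v.isLt; omega⟩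
  prox := fun a b =>
    (∃ (ha : a.val < D₁.n) (hb : b.val < D₁.n), D₁.prox ⟨a.val, ha⟩ ⟨b.val, hb⟩) ∨
    (∃ (_ : D₁.n ≤ a.val) (_ : D₁.n ≤ b.val),
      D₂.prox ⟨a.val - D₁.n, by have := a.isLt; omega⟩
              ⟨b.val - D₁.n, by have := b.isLt; omega⟩)

end PreDiagram

/-!
The codimension is a sum of nonnegative costs, one per vertex, and the cost grows quadratically with
the weight, with a discount of `1` for a free vertex and another `1` for a root. Two successors of
one vertex need enough weight above them that, for codimension at most `10`, they can only be the
free successors of a root of weight `4`, and the leftover budget then forces `Y_{1,1}`. Otherwise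
the diagram is a chain. Its weights decrease, so it either consists of vertices of weight at least
`2` or ends in a satellite of weight `1`; in the latter case all the vertices after some vertex are
proximate to that vertex, whose weight bounds their total weight. The weight of the root is `2`, `3`
or `4`, since a root of weight `5` already costs `13`, and it determines the series:
`A` for `2`, `D`, `E` and `J` for `3`, `X` and `Z` for `4`.
-/

namespace PreDiagram

section Forest

variable {D : PreDiagram} {a b c l u v : Fin D.n}

theorem ImPred.left_unique (h : D.ImPred a c) (h' : D.ImPred b c) : a = b :=
  Option.some.inj (h.symm.trans h')

theorem not_isRoot_iff_exists_imPred : ¬ D.IsRoot v ↔ ∃ u, D.ImPred u v :=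
  Option.ne_none_iff_exists'

theorem ImPred.properPred_iff (h : D.ImPred u v) : D.ProperPred a v ↔ D.Pred a u := by
  refine ⟨fun ha => ?_, fun ha => Relation.TransGen.tail' ha h⟩
  obtain ⟨u', ha, hu'⟩ := Relation.TransGen.tail'_iff.mp ha
  rwa [h.left_unique hu']

theorem ImPred.properPred (h : D.ImPred u v) : D.ProperPred u v :=
  Relation.TransGen.single h

theorem ImPred.not_isRoot (h : D.ImPred u v) : ¬ D.IsRoot v :=
  not_isRoot_iff_exists_imPred.mpr ⟨u, h⟩

theorem Pred.refl (v : Fin D.n) : D.Pred v v :=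
  Relation.ReflTransGen.refl

theorem ProperPred.pred (h : D.ProperPred a b) : D.Pred a b :=
  Relation.TransGen.to_reflTransGen h

theorem Pred.eq_or_properPred (h : D.Pred a b) : b = a ∨ D.ProperPred a b :=
  Relation.reflTransGen_iff_eq_or_transGen.mp h

theorem ProperPred.not_isRoot (h : D.ProperPred a b) : ¬ D.IsRoot b := by
  obtain ⟨u, -, hu⟩ := Relation.TransGen.tail'_iff.mp h
  exact hu.not_isRoot

theorem Pred.total (ha : D.Pred a c) (hb : D.Pred b c) : D.Pred a b ∨ D.Pred b a := by
  have hswap : Relator.RightUnique (Function.swap D.ImPred) := fun _ _ _ h h' => h.left_unique h'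
  have h := Relation.ReflTransGen.total_of_right_unique hswap
    (Relation.reflTransGen_swap.mpr ha) (Relation.reflTransGen_swap.mpr hb)
  simp only [Relation.reflTransGen_swap] at h
  exact h.symm

theorem RemoteProx.isSatellite (h : D.RemoteProx a b) : D.IsSatellite a :=
  ⟨b, h⟩

theorem RemoteProx.properPred_of_imPred (ht : D.RemoteProx v a) (h : D.ImPred u v) :
    D.ProperPred a u := by
  rcases (h.properPred_iff.mp ht.2.1).eq_or_properPred with rfl | hau
  · exact absurd h ht.2.2
  · exact hau

theorem IsRoot.isFree (h : D.IsRoot v) : D.IsFree v :=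
  fun ⟨_, ht⟩ => ht.2.1.not_isRoot h

theorem IsRoot.isFree_of_imPred (hu : D.IsRoot u) (h : D.ImPred u v) : D.IsFree v :=
  fun ⟨_, ht⟩ => (ht.properPred_of_imPred h).not_isRoot hu

namespace IsMED

variable (hD : D.IsMED)

include hD

theorem ne_of_properPred (h : D.ProperPred a b) : a ≠ b := by
  rintro rfl
  exact hD.forest a h

theorem ne_of_imPred (h : D.ImPred a b) : a ≠ b :=
  hD.ne_of_properPred h.properPred

theorem not_pred_of_properPred (h : D.ProperPred a b) : ¬ D.Pred b a :=
  fun h' => hD.forest a (Relation.TransGen.trans_left h h')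

theorem wellFounded_properPred : WellFounded D.ProperPred :=
  have : IsTrans _ D.ProperPred := ⟨fun _ _ _ => Relation.TransGen.trans⟩
  have : Std.Irrefl D.ProperPred := ⟨hD.forest⟩
  Finite.wellFounded_of_trans_of_irrefl _

theorem wellFounded_swap_properPred : WellFounded (Function.swap D.ProperPred) :=
  have : IsTrans _ (Function.swap D.ProperPred) := ⟨fun _ _ _ h h' => h'.trans h⟩
  have : Std.Irrefl (Function.swap D.ProperPred) := ⟨hD.forest⟩
  Finite.wellFounded_of_trans_of_irrefl _

theorem pred_of_isRoot_iff {R : Fin D.n} (hR : ∀ v, D.IsRoot v ↔ v = R) (v : Fin D.n) :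
    D.Pred R v := by
  induction v using hD.wellFounded_properPred.induction with
  | _ v ih =>
    by_cases hv : D.IsRoot v
    · rw [(hR v).mp hv]
      exact Pred.refl R
    · obtain ⟨u, hu⟩ := not_isRoot_iff_exists_imPred.mp hv
      exact (ih u hu.properPred).tail hu

theorem exists_isLeaf_pred (v : Fin D.n) : ∃ l, D.Pred v l ∧ D.IsLeaf l := by
  induction v using hD.wellFounded_swap_properPred.induction with
  | _ v ih =>
    by_cases hv : D.IsLeaf v
    · exact ⟨v, Pred.refl v, hv⟩
    · obtain ⟨w, hw⟩ : ∃ w, D.ImPred v w := by simpa [IsLeaf] using hv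
      obtain ⟨l, hwl, hl⟩ := ih w hw.properPred
      exact ⟨l, hwl.head hw, hl⟩

theorem not_pred_of_siblings (ha : D.ImPred u a) (hb : D.ImPred u b) (hab : a ≠ b) :
    ¬ D.Pred a b := fun h => by
  rcases h.eq_or_properPred with rfl | h
  · exact hab rfl
  · exact hD.not_pred_of_properPred ha.properPred (hb.properPred_iff.mp h)

end IsMED

end Forest

section Proximity

namespace IsMED

variable {D : PreDiagram} (hD : D.IsMED) {a b c t u v : Fin D.n}

include hD

theorem sum_wt_le (S : Finset (Fin D.n)) (hS : ∀ w ∈ S, D.prox w v) :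
    ∑ w ∈ S, D.wt w ≤ D.wt v :=
  (Finset.sum_le_sum_of_subset fun w hw => by simpa using hS w hw).trans (hD.prox_ineq v)

theorem wt_le_of_prox (h : D.prox a b) : D.wt a ≤ D.wt b := by
  simpa using hD.sum_wt_le {a} (by simpa using h)

theorem wt_le_of_pred (h : D.Pred a b) : D.wt b ≤ D.wt a := by
  induction h with
  | refl => exact le_rfl
  | tail _ h ih => exact (hD.wt_le_of_prox (hD.prox_parent _ _ h)).trans ih

theorem prox_iff_of_isFree (h : D.ImPred u v) (hv : D.IsFree v) : D.prox v a ↔ a = u := by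
  refine ⟨fun ha => ?_, ?_⟩
  · by_contra hau
    exact hv ⟨a, ha, hD.prox_remote v u a h ha hau⟩
  · rintro rfl
    exact hD.prox_parent v a h

theorem prox_iff_of_remoteProx (h : D.ImPred u v) (ht : D.RemoteProx v t) :
    D.prox v a ↔ a = u ∨ a = t := by
  refine ⟨fun ha => or_iff_not_imp_left.mpr fun hau => ?_, ?_⟩
  · exact hD.prox_unique v u a t h ha ht.1 hau fun htu => ht.2.2 (htu ▸ h)
  · rintro (rfl | rfl)
    exacts [hD.prox_parent v a h, ht.1]

theorem prox_of_pred (h : D.prox a b) (hbc : D.ProperPred b c) (hca : D.Pred c a) :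
    D.prox c b := by
  rcases hca.eq_or_properPred with rfl | hca
  · exact h
  · exact hD.prox_between a b c h hbc hca

theorem prox_of_imPred_of_remoteProx (h : D.ImPred u v) (ht : D.RemoteProx v t) : D.prox u t :=
  hD.prox_of_pred ht.1 (ht.properPred_of_imPred h) h.properPred.pred

theorem wt_add_wt_le_of_remoteProx (h : D.ImPred u v) (ht : D.RemoteProx v t) :
    D.wt u + D.wt v ≤ D.wt t := by
  rw [← Finset.sum_pair (hD.ne_of_imPred h)]
  refine hD.sum_wt_le _ ?_
  simp [ht.1, hD.prox_of_imPred_of_remoteProx h ht]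

-- A light free vertex is no leaf: the chain below it ends in a satellite of weight one, and
-- whatever that satellite is remotely proximate to lies above `c`, hence is `v`.
theorem two_le_wt_or_exists_prox_of_isFree (h : D.ImPred v c) (hc : D.IsFree c) :
    2 ≤ D.wt c ∨ ∃ d, D.ImPred c d ∧ D.prox d v := by
  refine or_iff_not_imp_left.mpr fun hwc => ?_
  obtain ⟨l, hcl, hl⟩ := hD.exists_isLeaf_pred c
  have hwl : D.wt l = 1 := by
    have := hD.wt_le_of_pred hcl
    have := hD.wt_pos l
    omega
  obtain ⟨t, ht⟩ := hD.minimal l hl hwl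
  have hwt : 2 ≤ D.wt t := by
    obtain ⟨u, hu⟩ := not_isRoot_iff_exists_imPred.mp ht.2.1.not_isRoot
    have := hD.wt_add_wt_le_of_remoteProx hu ht
    have := hD.wt_pos u
    omega
  have htc : D.ProperPred t c := by
    have hct : ¬ D.Pred c t := fun hct => by
      have := hD.wt_le_of_pred hct
      omega
    rcases ((ht.2.1.pred.total hcl).resolve_right hct).eq_or_properPred with rfl | htc
    · exact absurd (Pred.refl _) hct
    · exact htc
  have htv : t = v := (hD.prox_iff_of_isFree h hc).mp (hD.prox_of_pred ht.1 htc hcl)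
  have hcl : D.ProperPred c l :=
    hcl.eq_or_properPred.resolve_left fun hlc => hc (hlc ▸ ht.isSatellite)
  obtain ⟨d, hcd, hdl⟩ := Relation.TransGen.head'_iff.mp hcl
  exact ⟨d, hcd, htv ▸ hD.prox_of_pred ht.1 (htc.tail hcd) hdl⟩

end IsMED

/-- The part of the proximity sum at `v` contributed by the vertices in the branch through the
immediate successor `c` of `v`. -/
noncomputable def branchMass (D : PreDiagram) (v c : Fin D.n) : ℕ :=
  ∑ w ∈ univ.filter (fun w => D.prox w v ∧ D.Pred c w), D.wt w

namespace IsMED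

variable {D : PreDiagram} (hD : D.IsMED) {a b c d v : Fin D.n}

include hD

theorem branchMass_le (v c : Fin D.n) : D.branchMass v c ≤ D.wt v :=
  hD.sum_wt_le _ fun _ hw => (Finset.mem_filter.mp hw).2.1

theorem branchMass_add_le (ha : D.ImPred v a) (hb : D.ImPred v b) (hab : a ≠ b) :
    D.branchMass v a + D.branchMass v b ≤ D.wt v := by
  unfold branchMass
  rw [← Finset.sum_union]
  · refine hD.sum_wt_le _ fun w hw => ?_
    simp only [Finset.mem_union, Finset.mem_filter, Finset.mem_univ, true_and] at hw
    exact hw.elim And.left And.left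
  · refine Finset.disjoint_filter.mpr fun _ _ hwa hwb => ?_
    rcases hwa.2.total hwb.2 with h | h
    · exact hD.not_pred_of_siblings ha hb hab h
    · exact hD.not_pred_of_siblings hb ha hab.symm h

theorem wt_le_branchMass (h : D.ImPred v c) : D.wt c ≤ D.branchMass v c :=
  Finset.single_le_sum (fun _ _ => Nat.zero_le _)
    (by simp [hD.prox_parent c v h, Pred.refl])

theorem wt_add_wt_le_branchMass (h : D.ImPred v c) (hcd : D.ImPred c d) (hd : D.prox d v) :
    D.wt c + D.wt d ≤ D.branchMass v c := by
  rw [← Finset.sum_pair (hD.ne_of_imPred hcd)]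
  refine Finset.sum_le_sum_of_subset fun w hw => ?_
  rcases Finset.mem_insert.mp hw with rfl | hw
  · simp [hD.prox_parent w v h, Pred.refl]
  · rw [Finset.mem_singleton.mp hw]
    simp [hd, hcd.properPred.pred]

theorem two_le_branchMass_of_isFree (h : D.ImPred v c) (hc : D.IsFree c) :
    2 ≤ D.branchMass v c := by
  rcases hD.two_le_wt_or_exists_prox_of_isFree h hc with hwc | ⟨d, hcd, hd⟩
  · exact hwc.trans (hD.wt_le_branchMass h)
  · have := hD.wt_add_wt_le_branchMass h hcd hd
    have := hD.wt_pos c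
    have := hD.wt_pos d
    omega

theorem two_le_wt_of_isRoot (hv : D.IsRoot v) : 2 ≤ D.wt v := by
  by_cases hleaf : D.IsLeaf v
  · have := hD.wt_pos v
    have : D.wt v ≠ 1 := fun h => hv.isFree (hD.minimal v hleaf h)
    omega
  · obtain ⟨c, hc⟩ : ∃ c, D.ImPred v c := by simpa [IsLeaf] using hleaf
    exact (hD.two_le_branchMass_of_isFree hc (hv.isFree_of_imPred hc)).trans
      (hD.branchMass_le v c)

end IsMED

end Proximity

section Cost

/-- The contribution of a vertex to the codimension. -/
noncomputable def cost (D : PreDiagram) (v : Fin D.n) : ℤ :=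
  (D.wt v + 1).choose 2 - (if D.IsFree v then 1 else 0) - (if D.IsRoot v then 1 else 0)

variable {D : PreDiagram} {v : Fin D.n}

theorem sum_cost (D : PreDiagram) : ∑ v, D.cost v = D.cod := by
  simp only [cost, cod, degD, dimD, rts, frs, Finset.sum_sub_distrib, Finset.sum_boole]
  push_cast
  ring

-- The secant of the convex function `m ↦ C(m + 1, 2)` through `m = k - 1` and `m = k` lies below it
-- at all integers.
theorem mul_le_two_mul_choose_two (k : ℤ) (m : ℕ) :
    k * (2 * m - k + 1) ≤ 2 * (m + 1).choose 2 := by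
  have h : (k - m) * (k - m - 1) ≥ 0 := by
    rcases le_or_gt k m with hkm | hkm
    · exact mul_nonneg_of_nonpos_of_nonpos (by omega) (by omega)
    · exact mul_nonneg (by omega) (by omega)
  qify at h ⊢
  rw [Nat.cast_choose_two]
  push_cast
  linarith

theorem IsRoot.mul_le_cost (h : D.IsRoot v) (k : ℤ) :
    k * (2 * D.wt v - k + 1) ≤ 2 * (D.cost v + 2) := by
  have := mul_le_two_mul_choose_two k (D.wt v)
  simp only [cost, h.isFree, h, if_true]
  linarith

theorem mul_le_cost (h : ¬ D.IsRoot v) (k : ℤ) :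
    k * (2 * D.wt v - k + 1) ≤ 2 * (D.cost v + 1) := by
  have := mul_le_two_mul_choose_two k (D.wt v)
  simp only [cost, h, if_false]
  split_ifs <;> linarith

theorem IsSatellite.mul_le_cost (h : D.IsSatellite v) (k : ℤ) :
    k * (2 * D.wt v - k + 1) ≤ 2 * D.cost v := by
  have := mul_le_two_mul_choose_two k (D.wt v)
  have hroot : ¬ D.IsRoot v := fun hv => hv.isFree h
  have hfree : ¬ D.IsFree v := not_not_intro h
  simp only [cost, hroot, hfree, if_false]
  linarith

theorem two_le_cost (h : ¬ D.IsRoot v) (hwt : 2 ≤ D.wt v) : 2 ≤ D.cost v := by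
  have := mul_le_cost h 2
  omega

theorem IsSatellite.one_le_cost (h : D.IsSatellite v) (hwt : 1 ≤ D.wt v) : 1 ≤ D.cost v := by
  have := h.mul_le_cost 1
  omega

theorem IsMED.cost_nonneg (hD : D.IsMED) (v : Fin D.n) : 0 ≤ D.cost v := by
  by_cases hv : D.IsRoot v
  · have := hv.mul_le_cost 2
    have := hD.two_le_wt_of_isRoot hv
    omega
  · have := PreDiagram.mul_le_cost hv 1
    have := hD.wt_pos v
    omega

theorem IsMED.sum_cost_le_cod (hD : D.IsMED) (S : Finset (Fin D.n)) :
    ∑ v ∈ S, D.cost v ≤ D.cod :=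
  D.sum_cost ▸ Finset.sum_le_univ_sum_of_nonneg hD.cost_nonneg

end Cost

section Isomorphism

variable {D E : PreDiagram}

theorem isomorphic_of_bijective (f : Fin E.n → Fin D.n) (hf : Function.Bijective f)
    (hwt : ∀ i, E.wt i = D.wt (f i)) (hpar : ∀ i, D.parent (f i) = (E.parent i).map f)
    (hprox : ∀ i j, E.prox i j ↔ D.prox (f i) (f j)) : Isomorphic D E := by
  have hfe (v : Fin D.n) : f ((Equiv.ofBijective f hf).symm v) = v :=
    (Equiv.ofBijective f hf).apply_symm_apply v
  refine ⟨⟨(Equiv.ofBijective f hf).symm, fun v => ?_, fun a b => ?_, fun a b => ?_⟩⟩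
  · rw [hwt, hfe]
  · conv_rhs => rw [← hfe a, ← hfe b, ImPred, hpar]
    exact (Option.map_injective hf.injective).eq_iff.symm
  · rw [hprox, hfe, hfe]

end Isomorphism

section Branching

variable {D : PreDiagram} {R V c₁ c₂ d₁ d₂ v : Fin D.n}

namespace IsMED

variable (hD : D.IsMED)

include hD

theorem four_le_wt_of_isFree (h₁ : D.ImPred V c₁) (h₂ : D.ImPred V c₂) (hne : c₁ ≠ c₂)
    (hf₁ : D.IsFree c₁) (hf₂ : D.IsFree c₂) : 4 ≤ D.wt V := by
  have := hD.branchMass_add_le h₁ h₂ hne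
  have := hD.two_le_branchMass_of_isFree h₁ hf₁
  have := hD.two_le_branchMass_of_isFree h₂ hf₂
  omega

theorem three_le_wt_of_isFree (h₁ : D.ImPred V c₁) (h₂ : D.ImPred V c₂) (hne : c₁ ≠ c₂)
    (hf₂ : D.IsFree c₂) : 3 ≤ D.wt V := by
  have := hD.branchMass_add_le h₁ h₂ hne
  have := hD.wt_le_branchMass h₁
  have := hD.wt_pos c₁
  have := hD.two_le_branchMass_of_isFree h₂ hf₂
  omega

theorem five_le_wt_of_remoteProx {t u : Fin D.n} (hu : D.ImPred u V) (ht : D.RemoteProx V t)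
    (h₁ : D.ImPred V c₁) (hc₁ : D.RemoteProx c₁ u) (hV : 2 ≤ D.wt V) : 5 ≤ D.wt t := by
  have := hD.wt_add_wt_le_of_remoteProx h₁ hc₁
  have := hD.wt_add_wt_le_of_remoteProx hu ht
  have := hD.wt_pos c₁
  omega

-- `V` is proximate to the two vertices its successors are satellites of, so one of these is the
-- parent of `V` and `V` is a satellite of the other.
theorem exists_five_le_wt_of_isSatellite (h₁ : D.ImPred V c₁) (h₂ : D.ImPred V c₂)
    (hne : c₁ ≠ c₂) (hs₁ : D.IsSatellite c₁) (hs₂ : D.IsSatellite c₂) : ∃ t, 5 ≤ D.wt t := by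
  obtain ⟨t₁, ht₁⟩ := hs₁
  obtain ⟨t₂, ht₂⟩ := hs₂
  have ht : t₁ ≠ t₂ := by
    rintro rfl
    exact hD.succ_sat_diff V c₁ c₂ t₁ h₁ h₂ hne ht₁ ht₂
  have hV : 2 ≤ D.wt V := by
    have := hD.branchMass_add_le h₁ h₂ hne
    have := (hD.wt_pos c₁).trans (hD.wt_le_branchMass h₁)
    have := (hD.wt_pos c₂).trans (hD.wt_le_branchMass h₂)
    omega
  have hp₁ := hD.prox_of_imPred_of_remoteProx h₁ ht₁
  have hp₂ := hD.prox_of_imPred_of_remoteProx h₂ ht₂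
  obtain ⟨u, hu⟩ := not_isRoot_iff_exists_imPred.mp (ht₁.properPred_of_imPred h₁).not_isRoot
  by_cases hu₁ : t₁ = u
  · subst hu₁
    exact ⟨t₂, hD.five_le_wt_of_remoteProx hu ⟨hp₂, hD.prox_remote V t₁ t₂ hu hp₂ ht.symm⟩
      h₁ ht₁ hV⟩
  · by_cases hu₂ : t₂ = u
    · subst hu₂
      exact ⟨t₁, hD.five_le_wt_of_remoteProx hu ⟨hp₁, hD.prox_remote V t₂ t₁ hu hp₁ ht⟩ h₂ ht₂ hV⟩
    · exact absurd (hD.prox_unique V u t₁ t₂ hu hp₁ hp₂ hu₁ hu₂) ht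

theorem exists_wt_lt_of_isSatellite (h₁ : D.ImPred V c₁) (hs₁ : D.IsSatellite c₁) :
    ∃ t, D.wt V < D.wt t := by
  obtain ⟨t, ht⟩ := hs₁
  have := hD.wt_add_wt_le_of_remoteProx h₁ ht
  have := hD.wt_pos c₁
  exact ⟨t, by omega⟩

variable (hR : ∀ v, D.IsRoot v ↔ v = R)

include hR

theorem eq_root_of_branch (hcod : D.cod ≤ 10) (h₁ : D.ImPred V c₁) (h₂ : D.ImPred V c₂)
    (hne : c₁ ≠ c₂) : V = R := by
  by_contra hVR
  have hle (t : Fin D.n) : D.wt t ≤ D.wt R := hD.wt_le_of_pred (hD.pred_of_isRoot_iff hR t)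
  have hsum : D.cost R + D.cost V ≤ D.cod := by
    simpa [Ne.symm hVR] using hD.sum_cost_le_cod {R, V}
  have hcR := ((hR R).mpr rfl).mul_le_cost
  have hcV := mul_le_cost (mt (hR V).mp hVR)
  have hmixed (hV : 3 ≤ D.wt V) (h : ∃ t, D.wt V < D.wt t) : False := by
    obtain ⟨t, ht⟩ := h
    have := hle t
    have := hcR 4
    have := hcV 3
    omega
  by_cases hf₁ : D.IsFree c₁ <;> by_cases hf₂ : D.IsFree c₂
  · have := hD.four_le_wt_of_isFree h₁ h₂ hne hf₁ hf₂
    have := hle V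
    have := hcR 4
    have := hcV 4
    omega
  · exact hmixed (hD.three_le_wt_of_isFree h₂ h₁ hne.symm hf₁)
      (hD.exists_wt_lt_of_isSatellite h₂ (not_not.mp hf₂))
  · exact hmixed (hD.three_le_wt_of_isFree h₁ h₂ hne hf₂)
      (hD.exists_wt_lt_of_isSatellite h₁ (not_not.mp hf₁))
  · obtain ⟨t, ht⟩ :=
      hD.exists_five_le_wt_of_isSatellite h₁ h₂ hne (not_not.mp hf₁) (not_not.mp hf₂)
    have := hle t
    have := hcR 5
    have := hD.cost_nonneg V
    omega

end IsMED

/-- `c` and `d` form one of the two arms hanging from the root `R` in `Y_{1,1}`. -/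
structure IsArm (D : PreDiagram) (R c d : Fin D.n) : Prop where
  isRoot : D.IsRoot R
  imPred_left : D.ImPred R c
  imPred_right : D.ImPred c d
  remoteProx : D.RemoteProx d R
  wt_left : D.wt c = 1
  wt_right : D.wt d = 1

namespace IsArm

variable {a b c d c' d' v : Fin D.n}

theorem eq_of_pred (h : D.IsArm R c d) (hv : D.Pred v d) : v = R ∨ v = c ∨ v = d := by
  rcases hv.eq_or_properPred with hv | hv
  · exact .inr (.inr hv.symm)
  · rcases (h.imPred_right.properPred_iff.mp hv).eq_or_properPred with hv | hv
    · exact .inr (.inl hv.symm)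
    · rcases (h.imPred_left.properPred_iff.mp hv).eq_or_properPred with hv | hv
      · exact .inl hv.symm
      · exact absurd h.isRoot hv.not_isRoot

theorem left_ne_right (h : D.IsArm R c d) (h' : D.IsArm R c' d') : c ≠ d' := by
  rintro rfl
  exact h'.imPred_left.not_isRoot (h.imPred_left.left_unique h'.imPred_right ▸ h.isRoot)

theorem right_ne_right (h : D.IsArm R c d) (h' : D.IsArm R c' d') (hc : c ≠ c') : d ≠ d' := by
  rintro rfl
  exact hc (h.imPred_right.left_unique h'.imPred_right)

theorem root_ne_right (h : D.IsArm R c d) : R ≠ d := by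
  rintro rfl
  exact h.imPred_right.not_isRoot h.isRoot

theorem root_ne_left (h : D.IsArm R c d) : R ≠ c := by
  rintro rfl
  exact h.imPred_left.not_isRoot h.isRoot

theorem one_le_cost_right (h : D.IsArm R c d) : 1 ≤ D.cost d :=
  h.remoteProx.isSatellite.one_le_cost h.wt_right.ge

end IsArm

namespace IsMED

variable (hD : D.IsMED)

include hD

theorem one_le_cost_of_isLeaf (hv : D.IsLeaf v) (hroot : ¬ D.IsRoot v) : 1 ≤ D.cost v := by
  rcases (hD.wt_pos v).eq_or_lt with hwt | hwt
  · exact (hD.minimal v hv hwt.symm).one_le_cost hwt.le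
  · exact one_le_two.trans (two_le_cost hroot hwt)

theorem two_le_cost_or_exists_isArm (hroot : D.IsRoot R) (h : D.ImPred R c₁) :
    2 ≤ D.cost c₁ ∨ ∃ d, D.IsArm R c₁ d := by
  by_cases hwt : 2 ≤ D.wt c₁
  · exact .inl (two_le_cost h.not_isRoot hwt)
  · have hc := hD.wt_pos c₁
    obtain ⟨d, hcd, hd⟩ := (hD.two_le_wt_or_exists_prox_of_isFree h
      (hroot.isFree_of_imPred h)).resolve_left hwt
    have := hD.wt_le_of_prox (hD.prox_parent _ _ hcd)
    have := hD.wt_pos d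
    have hremote := hD.prox_remote d c₁ R hcd hd (hD.ne_of_imPred h)
    exact .inr ⟨d, hroot, h, hcd, ⟨hd, hremote⟩, by omega, by omega⟩

theorem exists_isArm (hcod : D.cod ≤ 10) (hroot : D.IsRoot R) (h₁ : D.ImPred R c₁)
    (h₂ : D.ImPred R c₂) (hne : c₁ ≠ c₂) : ∃ d, D.IsArm R c₁ d := by
  refine (hD.two_le_cost_or_exists_isArm hroot h₁).resolve_left fun hc₁ => ?_
  have hwt := hD.four_le_wt_of_isFree h₁ h₂ hne
    (hroot.isFree_of_imPred h₁) (hroot.isFree_of_imPred h₂)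
  have hcR := hroot.mul_le_cost 4
  have hRc₁ := hD.ne_of_imPred h₁
  rcases hD.two_le_cost_or_exists_isArm hroot h₂ with hc₂ | ⟨d, hd⟩
  · have hsum : D.cost R + (D.cost c₁ + D.cost c₂) ≤ D.cod := by
      simpa [hRc₁, hD.ne_of_imPred h₂, hne] using hD.sum_cost_le_cod {R, c₁, c₂}
    omega
  · have hcd : c₁ ≠ d := by
      rintro rfl
      exact hd.imPred_left.not_isRoot (h₁.left_unique hd.imPred_right ▸ hroot)
    have hsum : D.cost R + (D.cost c₁ + D.cost d) ≤ D.cod := by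
      simpa [hRc₁, hd.root_ne_right, hcd] using hD.sum_cost_le_cod {R, c₁, d}
    have := hd.one_le_cost_right
    omega

theorem eq_of_isArm_of_isLeaf (hcod : D.cod ≤ 10) (hwt : 4 ≤ D.wt R) (h₁ : D.IsArm R c₁ d₁)
    (h₂ : D.IsArm R c₂ d₂) (hne : c₁ ≠ c₂) (hR : ∀ v, D.IsRoot v ↔ v = R) (hv : D.IsLeaf v) :
    v = d₁ ∨ v = d₂ := by
  by_contra! hvd
  have hRv : R ≠ v := by
    rintro rfl
    exact hv c₁ h₁.imPred_left
  have hsum : D.cost R + (D.cost d₁ + (D.cost d₂ + D.cost v)) ≤ D.cod := by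
    simpa [h₁.root_ne_right, h₂.root_ne_right, hRv, h₁.right_ne_right h₂ hne, hvd.1.symm,
      hvd.2.symm] using hD.sum_cost_le_cod {R, d₁, d₂, v}
  have := h₁.isRoot.mul_le_cost 4
  have := h₁.one_le_cost_right
  have := h₂.one_le_cost_right
  have := hD.one_le_cost_of_isLeaf hv (mt (hR v).mp hRv.symm)
  omega

theorem isomorphic_diagY11_of_isArm (hwt : D.wt R = 4) (h₁ : D.IsArm R c₁ d₁)
    (h₂ : D.IsArm R c₂ d₂) (hne : c₁ ≠ c₂)
    (hall : ∀ v, v = R ∨ v = c₁ ∨ v = c₂ ∨ v = d₁ ∨ v = d₂) : Isomorphic D diagY11 := by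
  have hc {c d : Fin D.n} (h : D.IsArm R c d) (a : Fin D.n) : D.prox c a ↔ a = R :=
    hD.prox_iff_of_isFree h.imPred_left (h.isRoot.isFree_of_imPred h.imPred_left)
  have hd {c d : Fin D.n} (h : D.IsArm R c d) (a : Fin D.n) : D.prox d a ↔ a = c ∨ a = R :=
    hD.prox_iff_of_remoteProx h.imPred_right h.remoteProx
  have hroot := hD.root_not_prox R h₁.isRoot
  have hRc₁ := h₁.root_ne_left
  have hRc₂ := h₂.root_ne_left
  have hRd₁ := h₁.root_ne_right
  have hRd₂ := h₂.root_ne_right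
  have hcd₁ := h₁.left_ne_right h₁
  have hcd₁₂ := h₁.left_ne_right h₂
  have hcd₂₁ := h₂.left_ne_right h₁
  have hcd₂ := h₂.left_ne_right h₂
  have hdd := h₁.right_ne_right h₂ hne
  let f : Fin 5 → Fin D.n := ![R, c₁, c₂, d₁, d₂]
  have hinj : Function.Injective f := by
    intro i j
    fin_cases i <;> fin_cases j <;>
      simp [f, hRc₁, hRc₂, hRd₁, hRd₂, hne, hcd₁, hcd₁₂, hcd₂₁, hcd₂, hdd, Ne.symm]
  have hsurj : Function.Surjective f := fun v => by
    rcases hall v with rfl | rfl | rfl | rfl | rfl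
    exacts [⟨0, rfl⟩, ⟨1, rfl⟩, ⟨2, rfl⟩, ⟨3, rfl⟩, ⟨4, rfl⟩]
  refine isomorphic_of_bijective (E := diagY11) f ⟨hinj, hsurj⟩ (fun (i : Fin 5) => ?_)
    (fun (i : Fin 5) => ?_) (fun (i j : Fin 5) => ?_)
  · fin_cases i
    exacts [hwt.symm, h₁.wt_left.symm, h₂.wt_left.symm, h₁.wt_right.symm, h₂.wt_right.symm]
  · fin_cases i
    exacts [h₁.isRoot, h₁.imPred_left, h₂.imPred_left, h₁.imPred_right, h₂.imPred_right]
  · fin_cases i <;> fin_cases j <;>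
      simp [diagY11, f, hroot, hc h₁, hc h₂, hd h₁, hd h₂, hRc₁, hRc₂, hRd₁, hRd₂, hne, hcd₁,
        hcd₁₂, hcd₂₁, hcd₂, Ne.symm]

theorem isomorphic_diagY11_of_branch (hcod : D.cod ≤ 10) (hR : ∀ v, D.IsRoot v ↔ v = R)
    (h₁ : D.ImPred V c₁) (h₂ : D.ImPred V c₂) (hne : c₁ ≠ c₂) : Isomorphic D diagY11 := by
  obtain rfl := hD.eq_root_of_branch hR hcod h₁ h₂ hne
  have hroot : D.IsRoot V := (hR V).mpr rfl
  obtain ⟨d₁, ha₁⟩ := hD.exists_isArm hcod hroot h₁ h₂ hne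
  obtain ⟨d₂, ha₂⟩ := hD.exists_isArm hcod hroot h₂ h₁ hne.symm
  have hwt : D.wt V = 4 := by
    have := hD.four_le_wt_of_isFree h₁ h₂ hne
      (hroot.isFree_of_imPred h₁) (hroot.isFree_of_imPred h₂)
    have := hroot.mul_le_cost 5
    have : D.cost V ≤ D.cod := by simpa using hD.sum_cost_le_cod {V}
    omega
  refine hD.isomorphic_diagY11_of_isArm hwt ha₁ ha₂ hne fun v => ?_
  obtain ⟨l, hvl, hl⟩ := hD.exists_isLeaf_pred v
  rcases hD.eq_of_isArm_of_isLeaf hcod hwt.ge ha₁ ha₂ hne hR hl with rfl | rfl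
  · have := ha₁.eq_of_pred hvl
    tauto
  · have := ha₂.eq_of_pred hvl
    tauto

end IsMED

end Branching

section Chain

theorem exists_equiv_fin_forall_iff_lt {α : Type*} [Fintype α] {n : ℕ}
    (hn : Fintype.card α = n) (r : α → α → Prop) [IsStrictTotalOrder α r] :
    ∃ e : Fin n ≃ α, ∀ i j, r (e i) (e j) ↔ i < j := by
  let := linearOrderOfSTO r
  let e := Fintype.orderIsoFinOfCardEq α hn
  exact ⟨e.toEquiv, fun i j => e.lt_iff_lt⟩

theorem sum_range_add_mul_le {f : ℕ → ℤ} {c : ℤ} {s m : ℕ} (hsm : s ≤ m)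
    (hf : ∀ i, s ≤ i → i < m → c ≤ f i) :
    ∑ i ∈ range s, f i + c * (m - s) ≤ ∑ i ∈ range m, f i := by
  have h := Finset.card_nsmul_le_sum (Finset.Ico s m) f c fun i hi =>
    hf i (Finset.mem_Ico.mp hi).1 (Finset.mem_Ico.mp hi).2
  rw [Nat.card_Ico, nsmul_eq_mul, Nat.cast_sub hsm] at h
  rw [← Finset.sum_range_add_sum_Ico f hsm]
  linarith

/-- `v 0, …, v (D.n - 1)` is the list of all vertices of `D`, each a proper predecessor of the
next ones. The values `v i` with `D.n ≤ i` are junk: indexing by `ℕ` spares us the bounds in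
expressions such as `v (i + 1)`. -/
structure IsChain (D : PreDiagram) (v : ℕ → Fin D.n) : Prop where
  properPred_iff : ∀ {i j}, i < D.n → j < D.n → (D.ProperPred (v i) (v j) ↔ i < j)
  surj : ∀ x, ∃ i < D.n, v i = x

variable {D : PreDiagram} {v : ℕ → Fin D.n} {i j k t : ℕ}

theorem IsMED.exists_isChain (hD : D.IsMED) {R : Fin D.n} (hR : ∀ x, D.IsRoot x ↔ x = R)
    (hunique : ∀ x a b, D.ImPred x a → D.ImPred x b → a = b) : ∃ v, D.IsChain v := by
  have htotal (a b : Fin D.n) : D.Pred a b ∨ D.Pred b a :=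
    Relation.ReflTransGen.total_of_right_unique hunique
      (hD.pred_of_isRoot_iff hR a) (hD.pred_of_isRoot_iff hR b)
  have : IsStrictTotalOrder _ D.ProperPred :=
    { irrefl := hD.forest
      trans := fun _ _ _ => Relation.TransGen.trans
      trichotomous := fun a b hab hba => by
        rcases htotal a b with h | h
        · exact (h.eq_or_properPred.resolve_right hab).symm
        · exact h.eq_or_properPred.resolve_right hba }
  obtain ⟨e, he⟩ := exists_equiv_fin_forall_iff_lt (Fintype.card_fin D.n) D.ProperPred
  refine ⟨fun i => if h : i < D.n then e ⟨i, h⟩ else R, fun hi hj => ?_, fun x => ?_⟩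
  · simp only [hi, hj, dif_pos, he, Fin.mk_lt_mk]
  · obtain ⟨i, rfl⟩ := e.surjective x
    exact ⟨i, i.isLt, by simp⟩

namespace IsChain

variable (hc : D.IsChain v)

include hc

theorem apply_inj (hi : i < D.n) (hj : j < D.n) : v i = v j ↔ i = j := by
  refine ⟨fun h => ?_, congrArg v⟩
  have hij := hc.properPred_iff hi hj
  have hji := hc.properPred_iff hj hi
  rw [h, hc.properPred_iff hj hj] at hij hji
  omega

theorem pred (hij : i ≤ j) (hj : j < D.n) : D.Pred (v i) (v j) := by
  rcases hij.eq_or_lt with rfl | hij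
  · exact Pred.refl _
  · exact ((hc.properPred_iff (hij.trans hj) hj).mpr hij).pred

theorem isRoot (hn : 0 < D.n) : D.IsRoot (v 0) := by
  by_contra hroot
  obtain ⟨u, hu⟩ := not_isRoot_iff_exists_imPred.mp hroot
  obtain ⟨k, hk, rfl⟩ := hc.surj u
  have := (hc.properPred_iff hk hn).mp hu.properPred
  omega

theorem imPred (hi : i + 1 < D.n) : D.ImPred (v i) (v (i + 1)) := by
  have hii : i < D.n := by omega
  have hlt := (hc.properPred_iff hii hi).mpr (by omega)
  obtain ⟨u, hu⟩ := not_isRoot_iff_exists_imPred.mp hlt.not_isRoot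
  obtain ⟨k, hk, rfl⟩ := hc.surj u
  have hki := (hc.properPred_iff hk hi).mp hu.properPred
  rcases (hu.properPred_iff.mp hlt).eq_or_properPred with h | h
  · rwa [← h]
  · have := (hc.properPred_iff hii hk).mp h
    omega

theorem not_isRoot (hi : i + 1 < D.n) : ¬ D.IsRoot (v (i + 1)) :=
  (hc.imPred hi).not_isRoot

theorem isLeaf_last : D.IsLeaf (v (D.n - 1)) := fun w hw => by
  obtain ⟨i, hi, rfl⟩ := hc.surj w
  have := (hc.properPred_iff (by omega) hi).mp hw.properPred
  omega

theorem remotePred_iff (hi : i < D.n) (hj : j < D.n) :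
    D.RemotePred (v j) (v i) ↔ j + 2 ≤ i := by
  rw [RemotePred, hc.properPred_iff hj hi]
  refine ⟨fun ⟨hlt, hnot⟩ => ?_, fun h => ⟨by omega, fun him => ?_⟩⟩
  · by_contra hi'
    obtain rfl : i = j + 1 := by omega
    exact hnot (hc.imPred hi)
  · obtain ⟨i, rfl⟩ : ∃ i', i = i' + 1 := ⟨i - 1, by omega⟩
    have := (hc.apply_inj hj (by omega)).mp (him.left_unique (hc.imPred hi))
    omega

theorem isSatellite (hi : i < D.n) (h : D.prox (v i) (v j)) (hji : j + 2 ≤ i) :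
    D.IsSatellite (v i) :=
  ⟨v j, h, (hc.remotePred_iff hi (by omega)).mpr hji⟩

theorem isomorphic {E : PreDiagram} (hn : E.n = D.n) (hpar : E.parent = chainParent E.n)
    (hwt : ∀ i, E.wt i = D.wt (v i)) (hprox : ∀ i j, E.prox i j ↔ D.prox (v i) (v j)) :
    Isomorphic D E := by
  have hlt (i : Fin E.n) : (i : ℕ) < D.n := hn ▸ i.isLt
  refine isomorphic_of_bijective (fun i => v i) ⟨fun i j hij => ?_, fun x => ?_⟩ hwt
    (fun i => ?_) hprox
  · exact Fin.ext ((hc.apply_inj (hlt i) (hlt j)).mp hij)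
  · obtain ⟨i, hi, rfl⟩ := hc.surj x
    exact ⟨⟨i, hn.symm ▸ hi⟩, rfl⟩
  · obtain ⟨_ | i, hi⟩ := i
    · simpa [hpar, chainParent, IsRoot] using hc.isRoot (hn ▸ hi)
    · simpa [hpar, chainParent, ImPred] using hc.imPred (hn ▸ hi)

variable (hD : D.IsMED)

include hD

theorem eq_or_le_of_prox (hi : i < D.n) (hj : j < D.n) (h : D.prox (v i) (v j)) :
    i = j + 1 ∨ j + 2 ≤ i := by
  rcases i with _ | i
  · exact absurd h (hD.root_not_prox _ (hc.isRoot hi) _)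
  · by_cases hij : v j = v i
    · exact .inl (by rw [(hc.apply_inj hj (by omega)).mp hij])
    · exact .inr ((hc.remotePred_iff hi hj).mp
        (hD.prox_remote _ _ _ (hc.imPred hi) h hij))

theorem prox_succ (hi : i + 1 < D.n) : D.prox (v (i + 1)) (v i) :=
  hD.prox_parent _ _ (hc.imPred hi)

theorem prox_of_le (hi : i < D.n) (h : D.prox (v i) (v j)) (hjk : j < k) (hki : k ≤ i) :
    D.prox (v k) (v j) :=
  hD.prox_of_pred h ((hc.properPred_iff (by omega) (by omega)).mpr hjk) (hc.pred hki hi)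

theorem wt_anti (hij : i ≤ j) (hj : j < D.n) : D.wt (v j) ≤ D.wt (v i) :=
  hD.wt_le_of_pred (hc.pred hij hj)

theorem sum_wt_le (hi : j + k < D.n) (h : D.prox (v (j + k)) (v j)) :
    ∑ m ∈ range k, D.wt (v (j + 1 + m)) ≤ D.wt (v j) := by
  have hinj : Set.InjOn (fun m => v (j + 1 + m)) (range k) := fun m hm m' hm' hmm' => by
    simp only [Finset.coe_range, Set.mem_Iio] at hm hm'
    have := (hc.apply_inj (by omega) (by omega)).mp hmm'
    omega
  rw [← Finset.sum_image (f := D.wt) hinj]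
  refine hD.sum_wt_le _ fun w hw => ?_
  obtain ⟨m, hm, rfl⟩ := Finset.mem_image.mp hw
  have := Finset.mem_range.mp hm
  exact hc.prox_of_le hD hi h (by omega) (by omega)

theorem wt_add_wt_le (hi : j + 2 < D.n) (h : D.prox (v (j + 2)) (v j)) :
    D.wt (v (j + 1)) + D.wt (v (j + 2)) ≤ D.wt (v j) := by
  simpa [Finset.sum_range_succ, add_assoc] using hc.sum_wt_le hD hi h

theorem not_prox_of_wt_le (hj : j + 2 < D.n) (hwt : D.wt (v j) ≤ D.wt (v (j + 1))) :
    ¬ D.prox (v (j + 2)) (v j) := fun h => by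
  have := hc.wt_add_wt_le hD hj h
  have := hD.wt_pos (v (j + 2))
  omega

theorem sum_cost_le_cod (hk : k ≤ D.n) : ∑ i ∈ range k, D.cost (v i) ≤ D.cod := by
  have hinj : Set.InjOn v (range k) := fun i hi j hj hij => by
    simp only [Finset.coe_range, Set.mem_Iio] at hi hj
    exact (hc.apply_inj (by omega) (by omega)).mp hij
  rw [← Finset.sum_image (f := D.cost) hinj]
  exact hD.sum_cost_le_cod _

theorem prox_iff (hno : ∀ j, j + 2 < D.n → ¬ D.prox (v (j + 2)) (v j)) (hi : i < D.n)
    (hj : j < D.n) : D.prox (v i) (v j) ↔ i = j + 1 := by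
  refine ⟨fun h => ?_, ?_⟩
  · refine (hc.eq_or_le_of_prox hD hi hj h).resolve_right fun hle => ?_
    exact hno j (by omega) (hc.prox_of_le hD hi h (by omega) hle)
  · rintro rfl
    exact hc.prox_succ hD hi

theorem isomorphic_of_forall_not_prox {E : PreDiagram} (hn : E.n = D.n)
    (hpar : E.parent = chainParent E.n) (hwt : ∀ i, E.wt i = D.wt (v i))
    (hno : ∀ j, j + 2 < D.n → ¬ D.prox (v (j + 2)) (v j))
    (hprox : ∀ i j, E.prox i j ↔ (i : ℕ) = j + 1) : Isomorphic D E :=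
  hc.isomorphic hn hpar hwt fun i j => by
    rw [hprox, hc.prox_iff hD hno (hn ▸ i.isLt) (hn ▸ j.isLt)]

theorem sum_cost_add_le_cod {s : ℕ} (hs : 1 ≤ s) (hsn : s ≤ D.n)
    (hwt : ∀ i < D.n, 2 ≤ D.wt (v i)) :
    ∑ i ∈ range s, D.cost (v i) + 2 * (D.n - s) ≤ D.cod := by
  refine (sum_range_add_mul_le hsn fun i hsi hi => ?_).trans (hc.sum_cost_le_cod hD le_rfl)
  obtain ⟨i, rfl⟩ : ∃ i', i = i' + 1 := ⟨i - 1, by omega⟩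
  exact two_le_cost (hc.not_isRoot hi) (hwt _ hi)

end IsChain

/-- The last vertex of the chain `v` is remotely proximate to `v t`, so that all the vertices
after `v t` are proximate to it. -/
structure HasTail (D : PreDiagram) (v : ℕ → Fin D.n) (t : ℕ) : Prop where
  lt : t + 2 < D.n
  prox_last : D.prox (v (D.n - 1)) (v t)

theorem IsChain.two_le_wt_or_exists_hasTail (hc : D.IsChain v) (hD : D.IsMED) :
    (∀ i < D.n, 2 ≤ D.wt (v i)) ∨ ∃ t, D.HasTail v t := by
  have hpos := (v 0).pos
  by_cases hwt : D.wt (v (D.n - 1)) = 1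
  · obtain ⟨x, hx⟩ := hD.minimal _ hc.isLeaf_last hwt
    obtain ⟨t, ht, rfl⟩ := hc.surj x
    have := (hc.remotePred_iff (by omega) ht).mp hx.2
    exact .inr ⟨t, by omega, hx.1⟩
  · refine .inl fun i hi => ?_
    have := hD.wt_pos (v (D.n - 1))
    have := hc.wt_anti hD (show i ≤ D.n - 1 by omega) (by omega)
    omega

namespace HasTail

variable (ht : D.HasTail v t) (hc : D.IsChain v) (hD : D.IsMED)

include ht hc hD

theorem prox (hti : t < i) (hi : i < D.n) : D.prox (v i) (v t) :=
  have := ht.lt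
  hc.prox_of_le hD (by omega) ht.prox_last hti (by omega)

theorem prox_iff (hno : ∀ j < t, ¬ D.prox (v (j + 2)) (v j)) (hi : i < D.n) (hj : j < D.n) :
    D.prox (v i) (v j) ↔ i = j + 1 ∨ t + 2 ≤ i ∧ j = t := by
  refine ⟨fun h => (hc.eq_or_le_of_prox hD hi hj h).imp_right fun hji => ?_, ?_⟩
  · have htj : t ≤ j := by
      by_contra! hjt
      exact hno j hjt (hc.prox_of_le hD hi h (by omega) hji)
    obtain ⟨i, rfl⟩ : ∃ i', i = i' + 1 := ⟨i - 1, by omega⟩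
    have hne {m : ℕ} (hm : m < i) : v m ≠ v i := fun h => by
      have := (hc.apply_inj (by omega) (by omega)).mp h
      omega
    have hjt := hD.prox_unique _ _ _ _ (hc.imPred hi) h (ht.prox hc hD (by omega) hi)
      (hne (by omega)) (hne (by omega))
    exact ⟨by omega, (hc.apply_inj hj (by omega)).mp hjt⟩
  · rintro (rfl | ⟨hti, rfl⟩)
    · exact hc.prox_succ hD hi
    · exact ht.prox hc hD (by omega) hi

theorem isomorphic {E : PreDiagram} (hn : E.n = D.n) (hpar : E.parent = chainParent E.n)
    (hwt : ∀ i, E.wt i = D.wt (v i)) (hno : ∀ j < t, ¬ D.prox (v (j + 2)) (v j))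
    (hprox : ∀ i j, E.prox i j ↔ (i : ℕ) = j + 1 ∨ t + 2 ≤ i ∧ (j : ℕ) = t) : Isomorphic D E :=
  hc.isomorphic hn hpar hwt fun i j => by
    rw [hprox, ht.prox_iff hc hD hno (hn ▸ i.isLt) (hn ▸ j.isLt)]

theorem wt_add_wt_le : D.wt (v (t + 1)) + D.wt (v (t + 2)) ≤ D.wt (v t) :=
  hc.wt_add_wt_le hD ht.lt (ht.prox hc hD (by omega) ht.lt)

theorem sum_wt_le (hk : t + k < D.n) (hpos : 0 < k) :
    ∑ m ∈ range k, D.wt (v (t + 1 + m)) ≤ D.wt (v t) :=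
  hc.sum_wt_le hD hk (ht.prox hc hD (by omega) hk)

theorem two_le_wt (hi : i ≤ t) : 2 ≤ D.wt (v i) := by
  have := ht.wt_add_wt_le hc hD
  have := hD.wt_pos (v (t + 1))
  have := hD.wt_pos (v (t + 2))
  have := ht.lt
  have := hc.wt_anti hD hi (by omega)
  omega

theorem wt_eq_one (hwt : D.wt (v t) = 2) (hti : t < i) (hi : i < D.n) : D.wt (v i) = 1 := by
  have := ht.wt_add_wt_le hc hD
  have := hc.wt_anti hD (show t + 1 ≤ i from hti) hi
  have := hD.wt_pos (v (t + 2))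
  have := hD.wt_pos (v i)
  omega

theorem eq_add_three (hwt : D.wt (v t) = 2) : D.n = t + 3 := by
  have := ht.lt
  by_contra hn
  have hsum := ht.sum_wt_le hc hD (k := 3) (by omega) (by omega)
  have := hD.wt_pos (v (t + 1))
  have := hD.wt_pos (v (t + 2))
  have := hD.wt_pos (v (t + 3))
  simp only [Finset.sum_range_succ, Finset.sum_range_zero, add_assoc, Nat.reduceAdd] at hsum
  omega

theorem sum_cost_add_cost_add_le_cod {s : ℕ} (hs : 1 ≤ s) (hst : s ≤ t + 1) :
    ∑ i ∈ range s, D.cost (v i) + 2 * (t + 1 - s) + D.cost (v (t + 1)) + (D.n - t - 2) ≤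
      D.cod := by
  have hn := ht.lt
  have hbody := sum_range_add_mul_le (f := fun i => D.cost (v i)) (c := 2) hst
    fun i hsi hit => by
      obtain ⟨i, rfl⟩ : ∃ i', i = i' + 1 := ⟨i - 1, by omega⟩
      exact two_le_cost (hc.not_isRoot (by omega)) (ht.two_le_wt hc hD (by omega))
  have htail := sum_range_add_mul_le (f := fun i => D.cost (v i)) (c := 1)
    (show t + 2 ≤ D.n by omega) fun i hti hi =>
      (hc.isSatellite hi (ht.prox hc hD (by omega) hi) hti).one_le_cost (hD.wt_pos _)
  have := hc.sum_cost_le_cod hD le_rfl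
  rw [Finset.sum_range_succ] at htail
  push_cast at hbody htail
  linarith

theorem sum_cost_add_le_cod {s : ℕ} (hs : 1 ≤ s) (hst : s ≤ t + 1) :
    ∑ i ∈ range s, D.cost (v i) + 2 * (t + 1 - s) + (D.n - t - 2) ≤ D.cod := by
  have := ht.sum_cost_add_cost_add_le_cod hc hD hs hst
  have := hD.cost_nonneg (v (t + 1))
  linarith

end HasTail

end Chain

section RootWeightTwo

variable {D : PreDiagram} {v : ℕ → Fin D.n} {t : ℕ}

theorem HasTail.le_cod_and_isomorphic_diagA (ht : D.HasTail v t) (hc : D.IsChain v)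
    (hD : D.IsMED) (hwt : D.wt (v 0) = 2) :
    ((2 * t + 2 : ℕ) : ℤ) ≤ D.cod ∧ Isomorphic D (diagA (2 * t + 2)) := by
  have hlt := ht.lt
  have hbody (i : ℕ) (hi : i ≤ t) : D.wt (v i) = 2 :=
    (hwt ▸ hc.wt_anti hD i.zero_le (by omega)).antisymm (ht.two_le_wt hc hD hi)
  have htail (i : ℕ) := ht.wt_eq_one hc hD (hbody t le_rfl) (i := i)
  have hn := ht.eq_add_three hc hD (hbody t le_rfl)
  refine ⟨?_, ht.isomorphic hc hD (by grind [diagA]) rfl (by grind [diagA])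
    (fun j hj => hc.not_prox_of_wt_le hD (by omega) ?_) (by grind [diagA])⟩
  · have hcost := ht.sum_cost_add_le_cod hc hD le_rfl (by omega)
    have := (hc.isRoot (by omega)).mul_le_cost 2
    rw [Finset.sum_range_one] at hcost
    push_cast at hcost
    omega
  · rw [hbody j hj.le, hbody (j + 1) hj]

theorem IsChain.exists_isomorphic_diagA (hc : D.IsChain v) (hD : D.IsMED)
    (hwt : D.wt (v 0) = 2) : ∃ k : ℕ, 1 ≤ k ∧ k ≤ D.cod ∧ Isomorphic D (diagA k) := by
  have hpos := (v 0).pos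
  rcases hc.two_le_wt_or_exists_hasTail hD with hwt2 | ⟨t, ht⟩
  · have hwt' (i : ℕ) (hi : i < D.n) : D.wt (v i) = 2 :=
      (hwt ▸ hc.wt_anti hD i.zero_le hi).antisymm (hwt2 i hi)
    refine ⟨2 * D.n - 1, by omega, ?_, hc.isomorphic_of_forall_not_prox hD (by grind [diagA]) rfl
      (by grind [diagA]) (fun j hj => hc.not_prox_of_wt_le hD hj ?_) (by grind [diagA])⟩
    · have hcost := hc.sum_cost_add_le_cod hD le_rfl hpos hwt2
      have := (hc.isRoot hpos).mul_le_cost 2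
      rw [Finset.sum_range_one] at hcost
      push_cast at hcost
      omega
    · rw [hwt' j (by omega), hwt' (j + 1) (by omega)]
  · exact ⟨2 * t + 2, by omega, ht.le_cod_and_isomorphic_diagA hc hD hwt⟩

end RootWeightTwo

section RootWeightThree

variable {D : PreDiagram} {v : ℕ → Fin D.n} {t : ℕ}

theorem IsChain.not_prox_of_two_le_wt {j : ℕ} (hc : D.IsChain v) (hD : D.IsMED)
    (hwt : D.wt (v 0) ≤ 3) (hwt2 : ∀ i < D.n, 2 ≤ D.wt (v i)) (hj : j + 2 < D.n) :
    ¬ D.prox (v (j + 2)) (v j) := fun h => by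
  have := hc.wt_add_wt_le hD hj h
  have := hc.wt_anti hD j.zero_le (by omega)
  have := hwt2 (j + 1) (by omega)
  have := hwt2 (j + 2) hj
  omega

theorem IsChain.isomorphic_diagJ_zero (hc : D.IsChain v) (hD : D.IsMED) (hcod : D.cod ≤ 10)
    (hwt2 : ∀ i < D.n, 2 ≤ D.wt (v i)) (hn : 2 ≤ D.n) (hwt₀ : D.wt (v 0) = 3)
    (hwt₁ : D.wt (v 1) = 3) : Isomorphic D (diagJ 2 0) := by
  have hcost := hc.sum_cost_add_le_cod hD (s := 1 + 1) one_le_two hn hwt2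
  have hcost₀ := (hc.isRoot (by omega)).mul_le_cost 3
  have hcost₁ := mul_le_cost (hc.not_isRoot hn) 3
  rw [Finset.sum_range_succ, Finset.sum_range_one] at hcost
  push_cast at hcost
  refine hc.isomorphic_of_forall_not_prox hD ?_ rfl ?_
    (fun j hj => hc.not_prox_of_two_le_wt hD hwt₀.le hwt2 hj) ?_ <;> clear hwt2 <;> grind [diagJ]

theorem IsChain.exists_isomorphic_diagD (hc : D.IsChain v) (hD : D.IsMED) (hcod : D.cod ≤ 10)
    (hwt2 : ∀ i < D.n, 2 ≤ D.wt (v i)) (hwt₀ : D.wt (v 0) = 3)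
    (hwt₁ : 2 ≤ D.n → D.wt (v 1) = 2) :
    ∃ k, 4 ≤ k ∧ k ≤ 10 ∧ Isomorphic D (diagD k) := by
  have hpos := (v 0).pos
  have hbody (i : ℕ) (hi : i < D.n) (hi₀ : i ≠ 0) : D.wt (v i) = 2 :=
    ((hc.wt_anti hD (by omega) hi).trans_eq (hwt₁ (by omega))).antisymm (hwt2 i hi)
  have hcost := hc.sum_cost_add_le_cod hD le_rfl hpos hwt2
  have hcost₀ := (hc.isRoot hpos).mul_le_cost 3
  rw [Finset.sum_range_one] at hcost
  push_cast at hcost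
  obtain ⟨k, hk₄, hk, hkn⟩ : ∃ k, 4 ≤ k ∧ k % 2 = 0 ∧ (k - 4) / 2 + 1 = D.n :=
    ⟨2 * D.n + 2, by omega⟩
  refine ⟨k, hk₄, by omega, hc.isomorphic_of_forall_not_prox hD ?_ rfl ?_
    (fun j hj => hc.not_prox_of_two_le_wt hD hwt₀.le hwt2 hj) ?_⟩ <;> clear hwt2 <;>
    grind [diagD]

theorem HasTail.isomorphic_diagD_five_or_diagE (ht : D.HasTail v 0) (hc : D.IsChain v)
    (hD : D.IsMED) (hwt₀ : D.wt (v 0) = 3) :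
    Isomorphic D (diagD 5) ∨ Isomorphic D (diagE 6) ∨ Isomorphic D (diagE 7) := by
  have hn₃ : 3 ≤ D.n := ht.lt
  have hpos (i : ℕ) := hD.wt_pos (v i)
  by_cases hn : D.n = 3
  · have hsum := ht.wt_add_wt_le hc hD
    have hanti := hc.wt_anti hD one_le_two hn₃
    by_cases hwt₁ : D.wt (v 1) = 1
    · exact .inl (ht.isomorphic hc hD (by grind [diagD]) rfl (by grind [diagD]) (by simp)
        (by grind [diagD]))
    · exact .inr (.inr (ht.isomorphic hc hD (by grind [diagE]) rfl (by grind [diagE]) (by simp)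
        (by grind [diagE])))
  · have hsum := ht.sum_wt_le hc hD (k := 3) (by omega) (by omega)
    simp only [Finset.sum_range_succ, Finset.sum_range_zero, Nat.reduceAdd] at hsum
    have hn₄ : D.n = 4 := by
      by_contra hn₄
      have := ht.sum_wt_le hc hD (k := 4) (by omega) (by omega)
      simp only [Finset.sum_range_succ, Finset.sum_range_zero, Nat.reduceAdd] at this
      have := hpos 1
      have := hpos 2
      have := hpos 3
      have := hpos 4
      omega
    exact .inr (.inl (ht.isomorphic hc hD (by grind [diagE]) rfl (by grind [diagE]) (by simp)
        (by grind [diagE])))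

theorem HasTail.isomorphic_diagJ_one (ht : D.HasTail v t) (hc : D.IsChain v) (hD : D.IsMED)
    (hcod : D.cod ≤ 10) (ht₀ : 1 ≤ t) (hwt₀ : D.wt (v 0) = 3) (hwt₁ : D.wt (v 1) = 3) :
    Isomorphic D (diagJ 2 1) := by
  have hlt := ht.lt
  have hcost := ht.sum_cost_add_cost_add_le_cod hc hD (s := 1 + 1) one_le_two (by omega)
  have hcost₀ := (hc.isRoot (by omega)).mul_le_cost 3
  have hnotRoot₁ : ¬ D.IsRoot (v 1) := hc.not_isRoot (by omega)
  have hcost₁ := mul_le_cost hnotRoot₁ 3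
  have hcost₂ := hD.cost_nonneg (v (t + 1))
  rw [Finset.sum_range_succ, Finset.sum_range_one] at hcost
  push_cast at hcost
  obtain rfl : t = 1 := by omega
  simp only [Nat.reduceAdd] at hcost hcost₂
  have hn : D.n = 4 := by omega
  have hwt₂ : D.wt (v 2) = 1 := by
    by_contra hne
    have := hD.wt_pos (v 2)
    have hnotRoot₂ : ¬ D.IsRoot (v 2) := hc.not_isRoot (by omega)
    have := two_le_cost hnotRoot₂ (by omega)
    omega
  have hwt₃ : D.wt (v 3) = 1 :=
    (hwt₂ ▸ hc.wt_anti hD (Nat.le_succ 2) hlt).antisymm (hD.wt_pos _)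
  refine ht.isomorphic hc hD (by grind [diagJ]) rfl (by grind [diagJ]) (fun j hj => ?_)
    (by grind [diagJ])
  obtain rfl : j = 0 := by omega
  exact hc.not_prox_of_wt_le hD (by omega) (hwt₀.trans hwt₁.symm).le

theorem HasTail.wt_eq_two (ht : D.HasTail v t) (hc : D.IsChain v) (hD : D.IsMED)
    (hwt₁ : D.wt (v 1) = 2) {i : ℕ} (hi : 1 ≤ i) (hit : i ≤ t) : D.wt (v i) = 2 :=
  have := ht.lt
  (hwt₁ ▸ hc.wt_anti hD hi (by omega)).antisymm (ht.two_le_wt hc hD hit)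

theorem HasTail.exists_isomorphic_diagD (ht : D.HasTail v t) (hc : D.IsChain v) (hD : D.IsMED)
    (hcod : D.cod ≤ 10) (ht₀ : 1 ≤ t) (hwt₀ : D.wt (v 0) = 3) (hwt₁ : D.wt (v 1) = 2)
    (hprox : ¬ D.prox (v 2) (v 0)) : ∃ k, 4 ≤ k ∧ k ≤ 10 ∧ Isomorphic D (diagD k) := by
  have hbody (i : ℕ) (hi : 1 ≤ i) (hit : i ≤ t) := ht.wt_eq_two hc hD hwt₁ hi hit
  have htail (i : ℕ) := ht.wt_eq_one hc hD (hbody t ht₀ le_rfl) (i := i)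
  have hn := ht.eq_add_three hc hD (hbody t ht₀ le_rfl)
  have hcost := ht.sum_cost_add_le_cod hc hD le_rfl (by omega)
  have hcost₀ := (hc.isRoot (by omega)).mul_le_cost 3
  rw [Finset.sum_range_one] at hcost
  push_cast at hcost
  obtain ⟨k, hk₄, hk, hkt⟩ : ∃ k, 4 ≤ k ∧ k % 2 = 1 ∧ (k - 4) / 2 = t := ⟨2 * t + 5, by omega⟩
  refine ⟨k, hk₄, by omega, ht.isomorphic hc hD (by grind [diagD]) rfl
    (by grind [diagD]) (fun j hj => ?_) (by grind [diagD])⟩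
  rcases j.eq_zero_or_pos with rfl | hj₀
  · exact hprox
  · refine hc.not_prox_of_wt_le hD (by omega) ?_
    rw [hbody j hj₀ hj.le, hbody (j + 1) (by omega) hj]

theorem HasTail.isomorphic_diagE_eight (ht : D.HasTail v t) (hc : D.IsChain v) (hD : D.IsMED)
    (ht₀ : 1 ≤ t) (hwt₀ : D.wt (v 0) = 3) (hwt₁ : D.wt (v 1) = 2)
    (hprox : D.prox (v 2) (v 0)) : Isomorphic D (diagE 8) := by
  have hlt := ht.lt
  have hsum : D.wt (v 1) + D.wt (v 2) ≤ D.wt (v 0) := hc.wt_add_wt_le hD (by omega) hprox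
  obtain rfl : t = 1 := by
    by_contra ht₁
    have := ht.two_le_wt hc hD (show 2 ≤ t by omega)
    omega
  have hn : D.n = 4 := ht.eq_add_three hc hD hwt₁
  have hwt₂ : D.wt (v 2) = 1 := ht.wt_eq_one hc hD hwt₁ one_lt_two (by omega)
  have hwt₃ : D.wt (v 3) = 1 := ht.wt_eq_one hc hD hwt₁ (by omega) (by omega)
  have hprox₃₁ : D.prox (v 3) (v 1) := ht.prox hc hD (by omega) (by omega)
  have hprox₃₀ : ¬ D.prox (v 3) (v 0) := fun h => by
    have := hc.sum_wt_le hD (j := 0) (k := 3) (by omega) h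
    simp only [Finset.sum_range_succ, Finset.sum_range_zero, Nat.reduceAdd] at this
    omega
  refine hc.isomorphic (by grind [diagE]) rfl (by grind [diagE]) fun i j => ⟨?_, fun h => ?_⟩
  · have hsucc (i : ℕ) := hc.prox_succ hD (i := i)
    clear hsum
    grind [diagE]
  · have := hc.eq_or_le_of_prox hD (hn ▸ i.isLt) (hn ▸ j.isLt) h
    clear hsum
    grind [diagE]

theorem IsChain.isomorphic_of_wt_eq_three (hc : D.IsChain v) (hD : D.IsMED) (hcod : D.cod ≤ 10)
    (hwt : D.wt (v 0) = 3) :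
    (∃ k, 4 ≤ k ∧ k ≤ 10 ∧ Isomorphic D (diagD k)) ∨
    Isomorphic D (diagJ 2 0) ∨ Isomorphic D (diagJ 2 1) ∨
    Isomorphic D (diagE 6) ∨ Isomorphic D (diagE 7) ∨ Isomorphic D (diagE 8) := by
  rcases hc.two_le_wt_or_exists_hasTail hD with hwt2 | ⟨t, ht⟩
  · by_cases h₁ : 2 ≤ D.n ∧ D.wt (v 1) = 3
    · exact .inr (.inl (hc.isomorphic_diagJ_zero hD hcod hwt2 h₁.1 hwt h₁.2))
    · refine .inl (hc.exists_isomorphic_diagD hD hcod hwt2 hwt fun hn => ?_)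
      have := hc.wt_anti hD zero_le_one hn
      have := hwt2 1 hn
      omega
  · have hlt := ht.lt
    rcases t.eq_zero_or_pos with rfl | ht₀
    · rcases ht.isomorphic_diagD_five_or_diagE hc hD hwt with h | h | h
      · exact .inl ⟨5, by omega, by omega, h⟩
      · simp only [h, true_or, or_true]
      · simp only [h, true_or, or_true]
    · have : 2 ≤ D.wt (v 1) := ht.two_le_wt hc hD ht₀
      have : D.wt (v 1) ≤ D.wt (v 0) := hc.wt_anti hD zero_le_one (by omega)
      rcases show D.wt (v 1) = 2 ∨ D.wt (v 1) = 3 by omega with hwt₁ | hwt₁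
      · by_cases hprox : D.prox (v 2) (v 0)
        · simp only [ht.isomorphic_diagE_eight hc hD ht₀ hwt hwt₁ hprox, or_true]
        · exact .inl (ht.exists_isomorphic_diagD hc hD hcod ht₀ hwt hwt₁ hprox)
      · simp only [ht.isomorphic_diagJ_one hc hD hcod ht₀ hwt hwt₁, true_or, or_true]

end RootWeightThree

section RootWeightFour

variable {D : PreDiagram} {v : ℕ → Fin D.n} {t : ℕ}

theorem IsChain.isomorphic_diagX10_or_diagX12 (hc : D.IsChain v) (hD : D.IsMED)
    (hcod : D.cod ≤ 10) (hwt : D.wt (v 0) = 4) (hwt2 : ∀ i < D.n, 2 ≤ D.wt (v i)) :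
    Isomorphic D diagX10 ∨ Isomorphic D diagX12 := by
  have hpos := (v 0).pos
  have hcost₀ := (hc.isRoot hpos).mul_le_cost 4
  have hcost := hc.sum_cost_add_le_cod hD le_rfl hpos hwt2
  rw [Finset.sum_range_one] at hcost
  push_cast at hcost
  by_cases hn : D.n = 1
  · clear hwt2
    exact .inl (hc.isomorphic_of_forall_not_prox hD (by grind [diagX10]) rfl
      (by grind [diagX10]) (by omega) (by grind [diagX10]))
  · have hn₂ : D.n = 2 := by omega
    have hwt₁ : D.wt (v 1) = 2 := by
      have hnotRoot : ¬ D.IsRoot (v 1) := hc.not_isRoot (by omega)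
      have := mul_le_cost hnotRoot 3
      have := hc.sum_cost_le_cod hD (k := 1 + 1) (by omega)
      rw [Finset.sum_range_succ, Finset.sum_range_one] at this
      have := hwt2 1 (by omega)
      omega
    clear hwt2
    exact .inr (hc.isomorphic_of_forall_not_prox hD (by grind [diagX12]) rfl
      (by grind [diagX12]) (by omega) (by grind [diagX12]))

theorem HasTail.isomorphic_diagX11_or_diagZ11 (ht : D.HasTail v t) (hc : D.IsChain v)
    (hD : D.IsMED) (hcod : D.cod ≤ 10) (hwt : D.wt (v 0) = 4) :
    Isomorphic D diagX11 ∨ Isomorphic D diagZ11 := by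
  have hlt := ht.lt
  have hcost₀ := (hc.isRoot (by omega)).mul_le_cost 4
  have hcost := ht.sum_cost_add_cost_add_le_cod hc hD le_rfl (by omega)
  have hcost₁ := hD.cost_nonneg (v (t + 1))
  rw [Finset.sum_range_one] at hcost
  push_cast at hcost
  obtain rfl : t = 0 := by omega
  have hnotRoot : ¬ D.IsRoot (v 1) := hc.not_isRoot (by omega)
  have hwt₁ : D.wt (v 1) = 1 := by
    by_contra hne
    have := hD.wt_pos (v 1)
    have := two_le_cost hnotRoot (by omega)
    simp only [zero_add] at hcost
    omega
  have hwt_one (i : ℕ) (hi : 1 ≤ i) (hin : i < D.n) : D.wt (v i) = 1 :=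
    (hwt₁ ▸ hc.wt_anti hD hi hin).antisymm (hD.wt_pos _)
  rcases show D.n = 3 ∨ D.n = 4 by omega with hn | hn
  · exact .inl (ht.isomorphic hc hD (by grind [diagX11]) rfl (by grind [diagX11]) (by simp)
      (by grind [diagX11]))
  · exact .inr (ht.isomorphic hc hD (by grind [diagZ11]) rfl (by grind [diagZ11]) (by simp)
      (by grind [diagZ11]))

end RootWeightFour

theorem IsMED.wt_le_four_of_isRoot {D : PreDiagram} (hD : D.IsMED) {r : Fin D.n}
    (hr : D.IsRoot r) (hcod : D.cod ≤ 10) : D.wt r ≤ 4 := by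
  have hcost := hr.mul_le_cost 5
  have hle := hD.sum_cost_le_cod {r}
  rw [Finset.sum_singleton] at hle
  omega

end PreDiagram

open PreDiagram in
/-- A nonempty minimal Enriques diagram with exactly one root and `cod(D) ≤ 10` is
isomorphic to one of `A_1, …, A_10`, `D_4, …, D_10`, `J_{2,0}`, `J_{2,1}`, `E_6`, `E_7`,
`E_8`, `X_{1,0}`, `X_{1,1}`, `X_{1,2}`, `Z_11`, `Y_{1,1}`. -/
theorem statement6 (D : PreDiagram) (hD : D.IsMED) (hne : 0 < D.n) (R : Fin D.n)
    (hR : D.IsRoot R) (huniq : ∀ v, D.IsRoot v → v = R) (hcod : D.cod ≤ 10) :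
    (∃ k, 1 ≤ k ∧ k ≤ 10 ∧ Isomorphic D (diagA k)) ∨
    (∃ k, 4 ≤ k ∧ k ≤ 10 ∧ Isomorphic D (diagD k)) ∨
    Isomorphic D (diagJ 2 0) ∨ Isomorphic D (diagJ 2 1) ∨
    Isomorphic D (diagE 6) ∨ Isomorphic D (diagE 7) ∨ Isomorphic D (diagE 8) ∨
    Isomorphic D diagX10 ∨ Isomorphic D diagX11 ∨ Isomorphic D diagX12 ∨
    Isomorphic D diagZ11 ∨ Isomorphic D diagY11 := by
  have hR' (v) : D.IsRoot v ↔ v = R := ⟨huniq v, fun h => h ▸ hR⟩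
  by_cases hunique : ∀ x a b, D.ImPred x a → D.ImPred x b → a = b
  · obtain ⟨v, hc⟩ := hD.exists_isChain hR' hunique
    have hroot := hc.isRoot hne
    have := hD.two_le_wt_of_isRoot hroot
    have := hD.wt_le_four_of_isRoot hroot hcod
    rcases show D.wt (v 0) = 2 ∨ D.wt (v 0) = 3 ∨ D.wt (v 0) = 4 by omega with hwt | hwt | hwt
    · obtain ⟨k, hk, hkcod, hiso⟩ := hc.exists_isomorphic_diagA hD hwt
      exact .inl ⟨k, hk, by omega, hiso⟩
    · rcases hc.isomorphic_of_wt_eq_three hD hcod hwt with h | h | h | h | h | h <;>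
        simp only [h, true_or, or_true]
    · rcases hc.two_le_wt_or_exists_hasTail hD with hwt2 | ⟨t, ht⟩
      · rcases hc.isomorphic_diagX10_or_diagX12 hD hcod hwt hwt2 with h | h <;>
          simp only [h, true_or, or_true]
      · rcases ht.isomorphic_diagX11_or_diagZ11 hc hD hcod hwt with h | h <;>
          simp only [h, true_or, or_true]
  · push Not at hunique
    obtain ⟨x, a, b, ha, hb, hab⟩ := hunique
    simp only [hD.isomorphic_diagY11_of_branch hcod hR' ha hb hab, or_true]
end

section
/- For every i ≥ 2, the diagram D_{2i} satisfies cod = 2i, deg = 3i, dim = i, r = 3, δ = i+1, μ = 2i; and the diagram D_{2i+1} satisfies cod = 2i+1, deg = 3i+2, dim = i+1, r = 2, δ = i+1, μ = 2i+1. -/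
open Classical Finset

namespace PreDiagram

section Proximity

variable {D : PreDiagram}

/-- The clauses of the Law of Proximity that control how many vertices a given vertex is
proximate to. The clause on vertices lying between two proximate ones is left out; that a
root is proximate to no vertex is contained in `properPred_of_prox`. -/
structure ProximityLaw (D : PreDiagram) : Prop where
  prox_of_imPred : ∀ {u v}, D.ImPred u v → D.prox v u
  properPred_of_prox : ∀ {u v}, D.prox v u → D.ProperPred u v
  remoteProx_unique : ∀ {v t t'}, D.RemoteProx v t → D.RemoteProx v t' → t = t'

lemma card_imPred (v : Fin D.n) : #{u | D.ImPred u v} = if D.IsRoot v then 0 else 1 := by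
  unfold ImPred IsRoot
  cases D.parent v <;> simp [filter_eq]

lemma frs_add_card_isSatellite (D : PreDiagram) : D.frs + #{v | D.IsSatellite v} = D.n := by
  rw [frs, add_comm]
  convert (card_filter_add_card_filter_not (s := univ) D.IsSatellite).trans (card_fin D.n)

namespace ProximityLaw

variable (hD : D.ProximityLaw)
include hD

lemma prox_iff {u v : Fin D.n} : D.prox v u ↔ D.ImPred u v ∨ D.RemoteProx v u := by
  constructor
  · intro h
    by_cases himm : D.ImPred u v
    exacts [.inl himm, .inr ⟨h, hD.properPred_of_prox h, himm⟩]
  · rintro (himm | hrem)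
    exacts [hD.prox_of_imPred himm, hrem.1]

lemma card_remoteProx (v : Fin D.n) :
    #{t | D.RemoteProx v t} = if D.IsSatellite v then 1 else 0 := by
  split_ifs with hv
  · obtain ⟨t, ht⟩ := hv
    refine card_eq_one.2 ⟨t, ?_⟩
    ext t'
    simpa using ⟨fun ht' => hD.remoteProx_unique ht' ht, fun h => h ▸ ht⟩
  · simpa [filter_eq_empty_iff, IsSatellite] using hv

lemma card_prox (v : Fin D.n) :
    #{u | D.prox v u} = (if D.IsRoot v then 0 else 1) + if D.IsSatellite v then 1 else 0 := by
  simp only [hD.prox_iff, filter_or]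
  rw [card_union_of_disjoint (disjoint_filter.2 fun u _ himm hrem => hrem.2.2 himm),
    card_imPred, hD.card_remoteProx]

/-- Exchanging the two sums in `r(D)`, the weight of `v` is counted `1 - #{u | v ≻ u}` times,
which is `1` for a root, `0` for a free non-root and `-1` for a satellite. -/
theorem rCh_eq_sum_isRoot_sub_sum_isSatellite :
    D.rCh = ∑ v with D.IsRoot v, (D.wt v : ℤ) - ∑ v with D.IsSatellite v, (D.wt v : ℤ) := by
  have exchange : ∑ u, ∑ v with D.prox v u, (D.wt v : ℤ) =
      ∑ v, #{u | D.prox v u} * (D.wt v : ℤ) := by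
    rw [sum_comm' (t' := univ) (s' := fun v => {u | D.prox v u}) (by simp)]
    simp only [sum_const, nsmul_eq_mul]
  unfold rCh
  rw [sum_sub_distrib, exchange, ← sum_sub_distrib, sum_filter, sum_filter, ← sum_sub_distrib]
  refine sum_congr rfl fun v _ => ?_
  rw [hD.card_prox]
  split_ifs <;> push_cast <;> ring

end ProximityLaw

end Proximity

section Chain

variable {D : PreDiagram}

/-- A diagram is a chain if its forest is the path `0 → 1 → ⋯ → n - 1`. -/
def IsChain_s9 (D : PreDiagram) : Prop := D.parent = chainParent D.n

namespace IsChain_s9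

variable (hD : D.IsChain_s9)
include hD

lemma isRoot_iff {v : Fin D.n} : D.IsRoot v ↔ v.val = 0 := by
  simp [IsRoot, show D.parent = _ from hD, chainParent]

lemma imPred_iff {a b : Fin D.n} : D.ImPred a b ↔ b.val = a.val + 1 := by
  simp only [ImPred, show D.parent = _ from hD, chainParent]
  split_ifs with hb
  · simp [hb]
  · simp only [Option.some.injEq, Fin.ext_iff]
    omega

lemma properPred_iff {a b : Fin D.n} : D.ProperPred a b ↔ a < b := by
  constructor
  · intro h
    induction h with
    | single h => exact Fin.lt_def.2 (by rw [hD.imPred_iff.1 h]; omega)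
    | tail _ h ih => exact ih.trans (Fin.lt_def.2 (by rw [hD.imPred_iff.1 h]; omega))
  · obtain ⟨b, hb⟩ := b
    induction b with
    | zero => simp [Fin.lt_def]
    | succ b ih =>
      intro hab
      have himm : D.ImPred ⟨b, by omega⟩ ⟨b + 1, hb⟩ := hD.imPred_iff.2 rfl
      obtain hlt | heq := (Fin.le_def.2 (Nat.lt_succ_iff.1 hab) : a ≤ ⟨b, by omega⟩).lt_or_eq
      · exact (ih (by omega) hlt).tail himm
      · exact heq ▸ .single himm

lemma filter_isRoot (hn : 0 < D.n) : ({v | D.IsRoot v} : Finset (Fin D.n)) = {⟨0, hn⟩} := by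
  ext v
  simp [hD.isRoot_iff, Fin.ext_iff]

lemma rts_eq_one (hn : 0 < D.n) : D.rts = 1 := by
  rw [rts, hD.filter_isRoot hn, card_singleton]

end IsChain_s9

end Chain

section DiagD

variable (k : ℕ)

lemma n_diagD : (diagD k).n = 1 + (k - 4) / 2 + 2 * (k % 2) := by
  simp only [diagD]
  split_ifs <;> omega

lemma wt_diagD (v : Fin (diagD k).n) :
    (diagD k).wt v = if v.val = 0 then 3 else if v.val ≤ (k - 4) / 2 then 2 else 1 := rfl

lemma prox_diagD_iff {a b : Fin (diagD k).n} : (diagD k).prox a b ↔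
    a.val = b.val + 1 ∨ (k % 2 = 1 ∧ a.val = (k - 4) / 2 + 2 ∧ b.val = (k - 4) / 2) := Iff.rfl

lemma n_diagD_pos : 0 < (diagD k).n := by
  rw [n_diagD]
  omega

lemma isChain_diagD : (diagD k).IsChain_s9 := rfl

lemma remoteProx_diagD_iff {v t : Fin (diagD k).n} : (diagD k).RemoteProx v t ↔
    k % 2 = 1 ∧ v.val = (k - 4) / 2 + 2 ∧ t.val = (k - 4) / 2 := by
  simp only [RemoteProx, RemotePred, (isChain_diagD k).properPred_iff, (isChain_diagD k).imPred_iff,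
    prox_diagD_iff, Fin.lt_def]
  omega

lemma proximityLaw_diagD : (diagD k).ProximityLaw where
  prox_of_imPred h := .inl ((isChain_diagD k).imPred_iff.1 h)
  properPred_of_prox h := by
    rw [(isChain_diagD k).properPred_iff, Fin.lt_def]
    rw [prox_diagD_iff] at h
    omega
  remoteProx_unique h h' := by
    rw [remoteProx_diagD_iff] at h h'
    exact Fin.ext (h.2.2.trans h'.2.2.symm)

lemma isSatellite_diagD_iff {v : Fin (diagD k).n} :
    (diagD k).IsSatellite v ↔ k % 2 = 1 ∧ v.val = (k - 4) / 2 + 2 := by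
  simp only [IsSatellite, remoteProx_diagD_iff]
  exact ⟨fun ⟨_, hk, hv, _⟩ => ⟨hk, hv⟩, fun ⟨hk, hv⟩ => ⟨⟨(k - 4) / 2, by omega⟩, hk, hv, rfl⟩⟩

lemma card_isSatellite_diagD : #{v | (diagD k).IsSatellite v} = k % 2 := by
  simp only [isSatellite_diagD_iff]
  obtain hk | hk := Nat.mod_two_eq_zero_or_one k
  · simp [hk]
  · have hlast : (k - 4) / 2 + 2 < (diagD k).n := by rw [n_diagD]; omega
    rw [hk, card_eq_one]
    exact ⟨⟨_, hlast⟩, by ext v; simp [Fin.ext_iff]⟩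

lemma sum_wt_isSatellite_diagD : ∑ v with (diagD k).IsSatellite v, (diagD k).wt v = k % 2 := by
  rw [← card_isSatellite_diagD, card_eq_sum_ones]
  refine sum_congr rfl fun v hv => ?_
  have hv' := ((isSatellite_diagD_iff k).1 (mem_filter.1 hv).2).2
  rw [wt_diagD, if_neg (by omega), if_neg (by omega)]

lemma sum_comp_wt_diagD {M : Type*} [AddCommMonoid M] (f : ℕ → M) :
    ∑ v, f ((diagD k).wt v) = f 3 + ((k - 4) / 2) • f 2 + (2 * (k % 2)) • f 1 := by
  have weight_two : ∀ v ∈ range ((k - 4) / 2),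
      f (if 1 + v = 0 then 3 else if 1 + v ≤ (k - 4) / 2 then 2 else 1) = f 2 := fun v hv => by
    rw [mem_range] at hv
    rw [if_neg (by omega), if_pos (by omega)]
  have weight_one : ∀ v ∈ range (2 * (k % 2)), f (if 1 + (k - 4) / 2 + v = 0 then 3 else
      if 1 + (k - 4) / 2 + v ≤ (k - 4) / 2 then 2 else 1) = f 1 := fun v _ => by
    rw [if_neg (by omega), if_neg (by omega)]
  simp only [wt_diagD]
  rw [Fin.sum_univ_eq_sum_range
      (fun v => f (if v = 0 then 3 else if v ≤ (k - 4) / 2 then 2 else 1)) (diagD k).n,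
    n_diagD, sum_range_add, sum_range_add, sum_range_one, sum_congr rfl weight_two,
    sum_congr rfl weight_one]
  simp only [sum_const, card_range, if_true]

theorem rCh_diagD : (diagD k).rCh = 3 - (k % 2 : ℕ) := by
  rw [(proximityLaw_diagD k).rCh_eq_sum_isRoot_sub_sum_isSatellite,
    (isChain_diagD k).filter_isRoot (n_diagD_pos k), sum_singleton, ← Nat.cast_sum,
    sum_wt_isSatellite_diagD]
  rfl

theorem rts_diagD : (diagD k).rts = 1 := (isChain_diagD k).rts_eq_one (n_diagD_pos k)

variable {k} (hk : 4 ≤ k)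
include hk

theorem degD_diagD : (diagD k).degD = 3 * (k / 2) + 2 * (k % 2) := by
  rw [degD, sum_comp_wt_diagD k fun m => (m + 1).choose 2]
  simp only [Nat.choose, smul_eq_mul]
  omega

theorem deltaD_diagD : (diagD k).deltaD = k / 2 + 1 := by
  rw [deltaD, sum_comp_wt_diagD k fun m => m.choose 2]
  simp only [Nat.choose, smul_eq_mul]
  omega

theorem dimD_diagD : (diagD k).dimD = k / 2 + k % 2 := by
  have hfree := frs_add_card_isSatellite (diagD k)
  rw [card_isSatellite_diagD, n_diagD] at hfree
  rw [dimD, rts_diagD]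
  omega

theorem cod_diagD : (diagD k).cod = k := by
  rw [cod, degD_diagD hk, dimD_diagD hk]
  omega

theorem mu_diagD : (diagD k).mu = k := by
  rw [mu, deltaD_diagD hk, rCh_diagD, rts_diagD]
  omega

end DiagD

end PreDiagram

open PreDiagram in
/-- Characters of the diagrams `D_{2i}` and `D_{2i+1}` for `i ≥ 2` (Table 2-1). -/
theorem statement9 (i : ℕ) (hi : 2 ≤ i) :
    ((diagD (2 * i)).cod = 2 * (i : ℤ) ∧
     (diagD (2 * i)).degD = 3 * i ∧
     (diagD (2 * i)).dimD = i ∧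
     (diagD (2 * i)).rCh = 3 ∧
     (diagD (2 * i)).deltaD = i + 1 ∧
     (diagD (2 * i)).mu = 2 * (i : ℤ)) ∧
    ((diagD (2 * i + 1)).cod = 2 * (i : ℤ) + 1 ∧
     (diagD (2 * i + 1)).degD = 3 * i + 2 ∧
     (diagD (2 * i + 1)).dimD = i + 1 ∧
     (diagD (2 * i + 1)).rCh = 2 ∧
     (diagD (2 * i + 1)).deltaD = i + 1 ∧
     (diagD (2 * i + 1)).mu = 2 * (i : ℤ) + 1) := by
  have heven : 4 ≤ 2 * i := by omega
  have hodd : 4 ≤ 2 * i + 1 := by omega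
  rw [cod_diagD heven, degD_diagD heven, dimD_diagD heven, rCh_diagD, deltaD_diagD heven,
    mu_diagD heven, cod_diagD hodd, degD_diagD hodd, dimD_diagD hodd, rCh_diagD, deltaD_diagD hodd,
    mu_diagD hodd]
  omega
end
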